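/- arXiv:2201.04096 — 5 statements merged into one kernel-verified Lean document; each statement's English description precedes it below -/
import Mathlib

section
/- For every n ≥ 1, the abelianization of the pure braid group P_n is free abelian of rank n(n−1)/2: P_n^{ab} ≅ ℤ^{\binom{n}{2}}. -/
/-!
The pure braid group `P_n` is normally generated by the squares `σ_i²`: in any quotient of `B_n`
where the generators are involutions, a coset enumeration shows that the stabilizer of the last
point is generated by the earlier generators, so the quotient by the `σ_i²` acts faithfully on the
`n` points (`ArtinSystem.ker_le_normalClosure`).

Hence `P_n` is generated by the full twists `g σ_i² g⁻¹`. The class of such a twist in the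
abelianization depends only on the unordered pair `{g(i), g(i+1)}`
(`ArtinSystem.of_twist_eq`): all `σ_i` are conjugate, so one may take the last generator, and
an element fixing the last two points is, modulo `P_n`, a word in generators commuting with it. So
the abelianization is generated by one element for each pair of strands.

These elements form a basis because linking numbers detect them. The linking numbers come from an
action of `B_n` on `ℕ × ℕ × ℤ` (`crossing`), which moves an ordered pair of positions and counts in
the third coordinate how often the first strand crosses the second one from left to right. Pure
braids act by translations of the counter, and a full twist of `{a, b}` adds one on the pairs
`(a, b)` and `(b, a)` and zero on all others (`ArtinSystem.linking_twist`).
-/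

/-- Artin's braid relations among `m` generators `σ_0, …, σ_{m-1}` (0-indexed):
the commutation relators `σ_i σ_j σ_i⁻¹ σ_j⁻¹` for `|i - j| ≥ 2` and the braid
relators `σ_i σ_{i+1} σ_i (σ_{i+1} σ_i σ_{i+1})⁻¹`. -/
def braidRels (m : ℕ) : Set (FreeGroup (Fin m)) :=
  {r | (∃ i j : Fin m, ((i : ℕ) + 2 ≤ (j : ℕ) ∨ (j : ℕ) + 2 ≤ (i : ℕ)) ∧
          r = FreeGroup.of i * FreeGroup.of j * (FreeGroup.of i)⁻¹ * (FreeGroup.of j)⁻¹) ∨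
       (∃ i j : Fin m, (i : ℕ) + 1 = (j : ℕ) ∧
          r = FreeGroup.of i * FreeGroup.of j * FreeGroup.of i *
            (FreeGroup.of j * FreeGroup.of i * FreeGroup.of j)⁻¹)}

/-- The braid group `B_n` on `n` strands, with Artin's presentation on the
`n - 1` generators `σ_1, …, σ_{n-1}`. -/
abbrev BraidGroup (n : ℕ) : Type := PresentedGroup (braidRels (n - 1))

/-- The Artin generator `σ_{i+1}` of the braid group `B_n` (for `i : Fin (n-1)`). -/
def braidGen (n : ℕ) (i : Fin (n - 1)) : BraidGroup n := PresentedGroup.of i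

theorem PresentedGroup.mk_eq_one {α : Type*} {rels : Set (FreeGroup α)} {r : FreeGroup α}
    (h : r ∈ rels) : PresentedGroup.mk rels r = 1 := by
  change (QuotientGroup.mk r : FreeGroup α ⧸ Subgroup.normalClosure rels) = 1
  rw [QuotientGroup.eq_one_iff]
  exact Subgroup.subset_normalClosure h

theorem lift_of_eq_mk_map {α β : Type*} (e : α → β) (rels' : Set (FreeGroup β))
    (r : FreeGroup α) :
    FreeGroup.lift (fun i => (PresentedGroup.of (e i) : PresentedGroup rels')) r
      = PresentedGroup.mk rels' (FreeGroup.map e r) := by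
  have h : (FreeGroup.lift (fun i => (PresentedGroup.of (e i) : PresentedGroup rels')))
      = (PresentedGroup.mk rels').comp (FreeGroup.map e) := by
    ext i
    simp [PresentedGroup.of]
  rw [h]
  rfl

theorem braidRels_map {n : ℕ} {r : FreeGroup (Fin (n - 1))} (h : r ∈ braidRels (n - 1)) :
    FreeGroup.map (Fin.castLE (show n - 1 ≤ n from Nat.sub_le n 1)) r ∈ braidRels n := by
  obtain ⟨i, j, hij, rfl⟩ | ⟨i, j, hij, rfl⟩ := h
  · exact Or.inl ⟨Fin.castLE (Nat.sub_le n 1) i, Fin.castLE (Nat.sub_le n 1) j, by simpa using hij, by simp⟩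
  · exact Or.inr ⟨Fin.castLE (Nat.sub_le n 1) i, Fin.castLE (Nat.sub_le n 1) j, by simpa using hij, by simp⟩

/-- The stabilization homomorphism `s_n : B_n → B_{n+1}` sending each Artin
generator `σ_i` of `B_n` to the corresponding generator `σ_i` of `B_{n+1}`. -/
def braidStab (n : ℕ) : BraidGroup n →* BraidGroup (n + 1) :=
  PresentedGroup.toGroup
    (f := fun i : Fin (n - 1) =>
      (PresentedGroup.of (Fin.castLE (Nat.sub_le n 1) i) : BraidGroup (n + 1)))
    (fun r hr => by
      rw [lift_of_eq_mk_map]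
      exact PresentedGroup.mk_eq_one (braidRels_map hr))

/-- The property of a homomorphism `B_n → S_n` that it sends each Artin generator `σ_i`
to the transposition `(i, i+1)`. -/
def SendsGenToTransposition (n : ℕ) (π : BraidGroup n →* Equiv.Perm (Fin n)) : Prop :=
  ∀ i : Fin (n - 1),
    π (braidGen n i) =
      Equiv.swap ⟨(i : ℕ), by have := i.isLt; omega⟩ ⟨(i : ℕ) + 1, by have := i.isLt; omega⟩

open Equiv

/-! ### Groups with Artin generators over the symmetric group -/

/-- A group `G` generated by `s 0, …, s (M - 1)` subject to (at least) the braid relations,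
together with a homomorphism to permutations sending `s i` to the transposition `(i, i+1)`.
Both the braid group on `M + 1` strands and its quotients by normal subgroups of the pure braid
group are of this kind. To avoid bound bookkeeping the generators are indexed by `ℕ` (the values
`s i` with `i ≥ M` are irrelevant) and the strands are the numbers `0, …, M` inside `ℕ`. -/
structure ArtinSystem (G : Type*) [Group G] (M : ℕ) where
  s : ℕ → G
  comm : ∀ i j, i < M → j < M → i + 2 ≤ j → s i * s j = s j * s i
  braid : ∀ i, i + 1 < M → s i * s (i + 1) * s i = s (i + 1) * s i * s (i + 1)
  gen : Subgroup.closure {g | ∃ i < M, g = s i} = ⊤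
  perm : G →* Perm ℕ
  perm_s : ∀ i < M, perm (s i) = swap i (i + 1)

namespace ArtinSystem

variable {G : Type*} [Group G] {M : ℕ} (A : ArtinSystem G M)

/-- The subgroup generated by `s 0, …, s (m - 1)`; it only moves the points `0, …, m`. -/
def parabolic (m : ℕ) : Subgroup G := Subgroup.closure {g | ∃ i < m, g = A.s i}

/-- The word `s m * s (m - 1) * ⋯` of length `d`. For `d ≤ m + 1` these words represent the right
cosets of `parabolic m` in `parabolic (m + 1)`, once the generators are involutions. -/
def coset (m : ℕ) : ℕ → G
  | 0 => 1
  | d + 1 => coset m d * A.s (m - d)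

lemma coset_succ (m d : ℕ) : A.coset m (d + 1) = A.coset m d * A.s (m - d) := rfl

lemma s_mem {m i : ℕ} (h : i < m) : A.s i ∈ A.parabolic m :=
  Subgroup.subset_closure ⟨i, h, rfl⟩

lemma commute_coset {m d i : ℕ} (hm : m < M) (h : i + d + 1 ≤ m) :
    A.s i * A.coset m d = A.coset m d * A.s i := by
  induction d with
  | zero => simp [coset]
  | succ d ih =>
    rw [coset_succ, ← mul_assoc, ih (by omega), mul_assoc, mul_assoc,
      A.comm i (m - d) (by omega) (by omega) (by omega)]

/-- Moving a generator from right to left through a `coset` word that contains it away from the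
last letter lowers its index by one: one braid relation, the rest being commutations. -/
lemma coset_mul_s {m d i : ℕ} (hm : m < M) (him : i + 1 ≤ m) (hd : d ≤ m + 1)
    (h : m + 1 ≤ i + d) :
    A.coset m d * A.s (i + 1) = A.s i * A.coset m d := by
  induction d with
  | zero => omega
  | succ d ih =>
    rcases Nat.lt_or_ge (i + d) (m + 1) with h' | h'
    · obtain ⟨e, rfl⟩ : ∃ e, d = e + 1 := ⟨d - 1, by omega⟩
      have h1 : m - e = i + 1 := by omega
      have h2 : m - (e + 1) = i := by omega
      have hb := A.braid i (by omega)
      rw [coset_succ, coset_succ, h1, h2]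
      have hc := A.commute_coset (d := e) (i := i) hm (by omega)
      calc A.coset m e * A.s (i + 1) * A.s i * A.s (i + 1)
          = A.coset m e * (A.s (i + 1) * A.s i * A.s (i + 1)) := by group
        _ = (A.coset m e * A.s i) * A.s (i + 1) * A.s i := by rw [← hb]; group
        _ = _ := by rw [← hc]; group
    · have := ih (by omega) h'
      rw [coset_succ, mul_assoc, A.comm (m - d) (i + 1) (by omega) (by omega) (by omega),
        ← mul_assoc, this, mul_assoc]

lemma perm_parabolic {m : ℕ} (hm : m ≤ M) {h : G} (hh : h ∈ A.parabolic m) {x : ℕ}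
    (hx : m < x) : A.perm h x = x := by
  induction hh using Subgroup.closure_induction with
  | mem g hg =>
    obtain ⟨i, hi, rfl⟩ := hg
    rw [A.perm_s i (by omega), swap_apply_of_ne_of_ne (by omega) (by omega)]
  | one => simp
  | mul g k _ _ hg hk => rw [map_mul, Perm.mul_apply, hk, hg]
  | inv g _ hg => rw [map_inv, Perm.inv_eq_iff_eq, hg]

lemma perm_coset {m d : ℕ} (hm : m < M) (hd : d ≤ m + 1) :
    A.perm (A.coset m d) (m + 1 - d) = m + 1 := by
  induction d with
  | zero => simp [coset]
  | succ d ih =>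
    rw [coset_succ, map_mul, Perm.mul_apply, A.perm_s _ (by omega),
      show m + 1 - (d + 1) = m - d by omega, swap_apply_left,
      show m - d + 1 = m + 1 - d by omega, ih (by omega)]

/-- The union of the cosets `parabolic m * coset m d` is stable under right multiplication by
generators, hence is all of `parabolic (m + 1)`. -/
lemma exists_coset (hsq : ∀ i < M, A.s i * A.s i = 1) {m : ℕ} (hm : m < M) {q : G}
    (hq : q ∈ A.parabolic (m + 1)) :
    ∃ d ≤ m + 1, ∃ h ∈ A.parabolic m, q = h * A.coset m d := by
  have step : ∀ q i, i < m + 1 → (∃ d ≤ m + 1, ∃ h ∈ A.parabolic m, q = h * A.coset m d) →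
      ∃ d ≤ m + 1, ∃ h ∈ A.parabolic m, q * A.s i = h * A.coset m d := by
    rintro _ i hi ⟨d, hd, h, hh, rfl⟩
    rcases Nat.lt_trichotomy (i + d) m with h1 | h1 | h1
    · refine ⟨d, hd, h * A.s i, mul_mem hh (A.s_mem (by omega)), ?_⟩
      rw [mul_assoc, mul_assoc, A.commute_coset hm (by omega)]
    · refine ⟨d + 1, by omega, h, hh, ?_⟩
      rw [coset_succ, mul_assoc, show m - d = i by omega]
    · rcases Nat.lt_or_ge (m + 1) (i + d) with h2 | h2
      · obtain ⟨j, rfl⟩ : ∃ j, i = j + 1 := ⟨i - 1, by omega⟩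
        refine ⟨d, hd, h * A.s j, mul_mem hh (A.s_mem (by omega)), ?_⟩
        rw [mul_assoc, mul_assoc, A.coset_mul_s hm (by omega) hd (by omega)]
      · obtain ⟨e, rfl⟩ : ∃ e, d = e + 1 := ⟨d - 1, by omega⟩
        refine ⟨e, by omega, h, hh, ?_⟩
        rw [coset_succ, show m - e = i by omega, mul_assoc, mul_assoc, hsq i (by omega), mul_one]
  induction hq using Subgroup.closure_induction_right with
  | one => exact ⟨0, by omega, 1, one_mem _, by simp [coset]⟩
  | mul_right x _ y hy ih =>
    obtain ⟨i, hi, rfl⟩ := hy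
    exact step _ i hi ih
  | mul_inv_cancel x _ y hy ih =>
    obtain ⟨i, hi, rfl⟩ := hy
    rw [inv_eq_of_mul_eq_one_left (hsq i (by omega))]
    exact step _ i hi ih

/-- If the generators are involutions, the stabilizer of `m + 1` in `parabolic (m + 1)` is
`parabolic m`: the word `coset m d` carries `m + 1 - d` to `m + 1`, so only `d = 0` can occur. -/
lemma mem_parabolic_of_fix (hsq : ∀ i < M, A.s i * A.s i = 1) {m : ℕ} (hm : m < M) {q : G}
    (hq : q ∈ A.parabolic (m + 1)) (hfix : A.perm q (m + 1) = m + 1) : q ∈ A.parabolic m := by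
  obtain ⟨d, hd, h, hh, rfl⟩ := A.exists_coset hsq hm hq
  have h1 : A.perm (h * A.coset m d) (m + 1 - d) = m + 1 := by
    rw [map_mul, Perm.mul_apply, A.perm_coset hm hd,
      A.perm_parabolic (by omega) hh (by omega)]
  have h2 := (A.perm (h * A.coset m d)).injective (h1.trans hfix.symm)
  obtain rfl : d = 0 := by omega
  simpa [coset] using hh

/-- Coxeter's presentation of the symmetric group: if the generators are involutions, the
permutation representation is faithful. -/
lemma eq_one_of_perm (hsq : ∀ i < M, A.s i * A.s i = 1) {q : G} (hq : A.perm q = 1) :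
    q = 1 := by
  have key : ∀ m ≤ M, q ∈ A.parabolic m → q ∈ A.parabolic 0 := by
    intro m
    induction m with
    | zero => exact fun _ h => h
    | succ m ih =>
      exact fun hm h => ih (by omega) (A.mem_parabolic_of_fix hsq (by omega) h (by simp [hq]))
  have h0 := key M le_rfl (by unfold parabolic; rw [A.gen]; trivial)
  simpa [parabolic] using h0

/-- The system induced on the quotient by a normal subgroup of the kernel of `perm`. -/
def quot (N : Subgroup G) [N.Normal] (hN : N ≤ A.perm.ker) : ArtinSystem (G ⧸ N) M where
  s i := (A.s i : G ⧸ N)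
  comm i j hi hj h := by simp only [← QuotientGroup.mk_mul, A.comm i j hi hj h]
  braid i hi := by simp only [← QuotientGroup.mk_mul, A.braid i hi]
  gen := by
    have h := congrArg (Subgroup.map (QuotientGroup.mk' N)) A.gen
    rw [MonoidHom.map_closure, Subgroup.map_top_of_surjective _ (QuotientGroup.mk'_surjective N)] at h
    rw [← h]
    congr 1
    ext x
    constructor
    · rintro ⟨i, hi, rfl⟩
      exact ⟨_, ⟨i, hi, rfl⟩, rfl⟩
    · rintro ⟨_, ⟨i, hi, rfl⟩, rfl⟩
      exact ⟨i, hi, rfl⟩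
  perm := QuotientGroup.lift N A.perm hN
  perm_s i hi := by simpa using A.perm_s i hi

lemma perm_sq {i : ℕ} (hi : i < M) : A.perm (A.s i * A.s i) = 1 := by
  simp [A.perm_s i hi]

/-! ### Generators of the abelianized pure braid group -/

/-- The pure braid group is normally generated by the squares of the Artin generators. -/
lemma ker_le_normalClosure :
    A.perm.ker ≤ Subgroup.normalClosure {g | ∃ i < M, g = A.s i * A.s i} := by
  intro g hg
  set N := Subgroup.normalClosure {g | ∃ i < M, g = A.s i * A.s i} with hNdef
  have hN : N ≤ A.perm.ker := by
    apply Subgroup.normalClosure_le_normal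
    rintro _ ⟨i, hi, rfl⟩
    exact A.perm_sq hi
  have := (A.quot N hN).eq_one_of_perm (q := (g : G ⧸ N)) (fun i hi => by
    change ((A.s i * A.s i : G) : G ⧸ N) = 1
    rw [QuotientGroup.eq_one_iff]
    exact Subgroup.subset_normalClosure ⟨i, hi, rfl⟩) hg
  rwa [QuotientGroup.eq_one_iff] at this

lemma conj_mem_ker (g : G) {i : ℕ} (hi : i < M) :
    g * (A.s i * A.s i) * g⁻¹ ∈ A.perm.ker :=
  (MonoidHom.normal_ker A.perm).conj_mem _ (A.perm_sq hi) g

/-- The pure braid `g (s i)² g⁻¹`: a full twist of the strands `perm g i` and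
`perm g (i + 1)`. -/
def twist (g : G) {i : ℕ} (hi : i < M) : A.perm.ker :=
  ⟨g * (A.s i * A.s i) * g⁻¹, A.conj_mem_ker g hi⟩

lemma ker_hom_ext {X : Type*} [Group X] {f f' : A.perm.ker →* X}
    (h : ∀ g i (hi : i < M), f (A.twist g hi) = f' (A.twist g hi)) : f = f' := by
  have key : A.perm.ker ≤ (f.eqLocus f').map A.perm.ker.subtype := by
    refine A.ker_le_normalClosure.trans ((Subgroup.closure_le _).2 ?_)
    intro x hx
    obtain ⟨_, ⟨i, hi, rfl⟩, hc⟩ := Group.mem_conjugatesOfSet_iff.1 hx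
    obtain ⟨k, rfl⟩ := isConj_iff.1 hc
    exact ⟨A.twist k hi, h k i hi, rfl⟩
  ext ⟨x, hx⟩
  obtain ⟨y, hy, rfl⟩ := key hx
  exact hy

/-- Elements of `G` permute the strands `0, …, M` among themselves. -/
lemma perm_le (g : G) {x : ℕ} (hx : x ≤ M) : A.perm g x ≤ M := by
  have key : ∀ g ∈ A.parabolic M, ∀ x, x ≤ M ↔ A.perm g x ≤ M := by
    intro g hg
    induction hg using Subgroup.closure_induction with
    | mem g hg =>
      obtain ⟨i, hi, rfl⟩ := hg
      intro x
      rw [A.perm_s i hi, swap_apply_def]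
      split_ifs <;> omega
    | one => simp
    | mul g k _ _ hg hk => intro x; rw [map_mul, Perm.mul_apply, hk, hg]
    | inv g _ hg =>
      intro x
      rw [hg (A.perm g⁻¹ x), ← Perm.mul_apply, ← map_mul, mul_inv_cancel, map_one, Perm.one_apply]
  exact (key g (by unfold parabolic; rw [A.gen]; trivial) x).1 hx

/-- Every pair of strands is twisted by some `twist`. -/
lemma exists_perm_eq {a b : ℕ} (hab : a < b) (hb : b ≤ M) :
    ∃ (g : G) (i : ℕ), i < M ∧ A.perm g i = a ∧ A.perm g (i + 1) = b := by
  induction b, hab using Nat.le_induction with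
  | base => exact ⟨1, a, by omega, by simp, by simp⟩
  | succ b hab ih =>
    obtain ⟨g, i, hi, h1, h2⟩ := ih (by omega)
    refine ⟨A.s b * g, i, hi, ?_, ?_⟩
    · rw [map_mul, Perm.mul_apply, h1, A.perm_s b (by omega),
        swap_apply_of_ne_of_ne (by omega) (by omega)]
    · rw [map_mul, Perm.mul_apply, h2, A.perm_s b (by omega), swap_apply_left]

/-- `s i` is the conjugate of `s (i + 1)` by `s (i + 1) * s i`. -/
lemma twist_succ (g : G) {i : ℕ} (hi : i + 1 < M) :
    A.twist g (Nat.lt_of_succ_lt hi) = A.twist (g * (A.s (i + 1) * A.s i)) hi := by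
  apply Subtype.ext
  have h := A.braid i hi
  have h1 : A.s i = (A.s (i + 1) * A.s i) * A.s (i + 1) * (A.s (i + 1) * A.s i)⁻¹ := by
    rw [← h]; group
  change g * (A.s i * A.s i) * g⁻¹ = _ * (A.s (i + 1) * A.s (i + 1)) * _
  have h2 : A.s i * A.s i = (A.s (i + 1) * A.s i) * (A.s (i + 1) * A.s (i + 1)) *
      (A.s (i + 1) * A.s i)⁻¹ := by
    calc A.s i * A.s i = ((A.s (i + 1) * A.s i) * A.s (i + 1) * (A.s (i + 1) * A.s i)⁻¹) *
          ((A.s (i + 1) * A.s i) * A.s (i + 1) * (A.s (i + 1) * A.s i)⁻¹) := by rw [← h1]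
      _ = _ := by group
  rw [h2]
  group

/-- Every full twist is a conjugate of the square of the last generator `s L`, in a way that keeps
track of the two twisted strands. -/
lemma exists_twist_last {L : ℕ} (hL : L < M) (hLM : L + 1 = M) (g : G) {i : ℕ} (hi : i < M) :
    ∃ g' : G, A.twist g hi = A.twist g' hL ∧ A.perm g' L = A.perm g i ∧
      A.perm g' (L + 1) = A.perm g (i + 1) := by
  obtain ⟨k, hk⟩ : ∃ k, i + k = L := ⟨L - i, by omega⟩
  induction k generalizing i g with
  | zero => subst hk; exact ⟨g, rfl, rfl, rfl⟩
  | succ k ih =>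
    obtain ⟨g', h1, h2, h3⟩ := ih (g * (A.s (i + 1) * A.s i)) (i := i + 1) (by omega) (by omega)
    refine ⟨g', ?_, ?_, ?_⟩
    · rw [← h1]; exact A.twist_succ g (by omega)
    · rw [h2]
      simp only [map_mul, Perm.mul_apply]
      rw [A.perm_s i (by omega), A.perm_s (i + 1) (by omega), swap_apply_right,
        swap_apply_of_ne_of_ne (by omega) (by omega)]
    · rw [h3]
      simp only [map_mul, Perm.mul_apply]
      rw [A.perm_s i (by omega), A.perm_s (i + 1) (by omega),
        swap_apply_of_ne_of_ne (x := i + 1 + 1) (by omega) (by omega), swap_apply_right]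

/-- An element fixing the last two strands is, up to a pure braid, a word in generators commuting
with the last generator `s L`. -/
lemma exists_eq_mul_of_fix {L : ℕ} (hLM : L + 1 = M) {k : G}
    (h1 : A.perm k L = L) (h2 : A.perm k (L + 1) = L + 1) :
    ∃ w p, p ∈ A.perm.ker ∧ w * A.s L = A.s L * w ∧ k = w * p := by
  set Q := A.quot A.perm.ker le_rfl with hQ
  have hsq : ∀ i < M, Q.s i * Q.s i = 1 := fun i hi => by
    change ((A.s i * A.s i : G) : G ⧸ A.perm.ker) = 1
    rw [QuotientGroup.eq_one_iff]
    exact A.perm_sq hi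
  have h3 : (k : G ⧸ A.perm.ker) ∈ Q.parabolic (L - 1) := by
    have h4 : (k : G ⧸ A.perm.ker) ∈ Q.parabolic L :=
      Q.mem_parabolic_of_fix hsq (by omega)
        (by rw [hLM]; unfold parabolic; rw [Q.gen]; trivial) h2
    cases L with
    | zero => exact h4
    | succ L => exact Q.mem_parabolic_of_fix hsq (by omega) h4 h1
  have h5 : ∀ q ∈ Q.parabolic (L - 1), ∃ w : G, w * A.s L = A.s L * w ∧ (w : G ⧸ A.perm.ker) = q := by
    intro q hq
    induction hq using Subgroup.closure_induction with
    | mem q hq =>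
      obtain ⟨i, hi, rfl⟩ := hq
      exact ⟨A.s i, A.comm i L (by omega) (by omega) (by omega), rfl⟩
    | one => exact ⟨1, by simp, rfl⟩
    | mul q r _ _ hq hr =>
      obtain ⟨w, hw, rfl⟩ := hq
      obtain ⟨v, hv, rfl⟩ := hr
      exact ⟨w * v, Commute.mul_left hw hv, rfl⟩
    | inv q _ hq =>
      obtain ⟨w, hw, rfl⟩ := hq
      exact ⟨w⁻¹, Commute.inv_left hw, rfl⟩
  obtain ⟨w, hw, hwk⟩ := h5 _ h3
  exact ⟨w, w⁻¹ * k, QuotientGroup.eq.1 hwk, hw, by group⟩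

lemma of_twist_eq_last {L : ℕ} (hL : L < M) (hLM : L + 1 = M) {g h : G}
    (h1 : A.perm g L = A.perm h L) (h2 : A.perm g (L + 1) = A.perm h (L + 1)) :
    Abelianization.of (A.twist g hL) = Abelianization.of (A.twist h hL) := by
  obtain ⟨w, p, hp, hw, hk⟩ := A.exists_eq_mul_of_fix hLM (k := h⁻¹ * g)
    (by rw [map_mul, Perm.mul_apply, h1, ← Perm.mul_apply, ← map_mul]; simp)
    (by rw [map_mul, Perm.mul_apply, h2, ← Perm.mul_apply, ← map_mul]; simp)
  obtain rfl : g = h * w * p := by rw [mul_assoc, ← hk]; group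
  let c : A.perm.ker := ⟨(h * w) * p * (h * w)⁻¹, (MonoidHom.normal_ker A.perm).conj_mem _ hp _⟩
  have hww : w * (A.s L * A.s L) * w⁻¹ = A.s L * A.s L := by
    have : Commute w (A.s L * A.s L) := Commute.mul_right hw hw
    rw [this.eq]; group
  have : A.twist (h * w * p) hL = c * A.twist h hL * c⁻¹ := by
    apply Subtype.ext
    change h * w * p * (A.s L * A.s L) * (h * w * p)⁻¹ =
      ((h * w) * p * (h * w)⁻¹) * (h * (A.s L * A.s L) * h⁻¹) * ((h * w) * p * (h * w)⁻¹)⁻¹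
    nth_rewrite 2 [← hww]
    group
  rw [this, map_mul, map_mul, map_inv]
  exact mul_inv_cancel_comm _ _

/-- In the abelianization, the class of a full twist depends only on the unordered pair of strands
that it twists. -/
lemma of_twist_eq {g h : G} {i j : ℕ} (hi : i < M) (hj : j < M)
    (H : s(A.perm g i, A.perm g (i + 1)) = s(A.perm h j, A.perm h (j + 1))) :
    Abelianization.of (A.twist g hi) = Abelianization.of (A.twist h hj) := by
  obtain ⟨L, hLM⟩ : ∃ L, L + 1 = M := ⟨M - 1, by omega⟩
  have hL : L < M := by omega
  obtain ⟨g', e1, e2, e3⟩ := A.exists_twist_last hL hLM g hi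
  obtain ⟨h', f1, f2, f3⟩ := A.exists_twist_last hL hLM h hj
  rw [e1, f1]
  rw [← e2, ← e3, ← f2, ← f3, Sym2.eq_iff] at H
  rcases H with ⟨H1, H2⟩ | ⟨H1, H2⟩
  · exact A.of_twist_eq_last hL hLM H1 H2
  · have : A.twist h' hL = A.twist (h' * A.s L) hL := by
      apply Subtype.ext
      change h' * (A.s L * A.s L) * h'⁻¹ = h' * A.s L * (A.s L * A.s L) * (h' * A.s L)⁻¹
      group
    rw [this]
    apply A.of_twist_eq_last hL hLM
    · rw [H1, map_mul, Perm.mul_apply, A.perm_s L hL, swap_apply_left]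
    · rw [H2, map_mul, Perm.mul_apply, A.perm_s L hL, swap_apply_right]

end ArtinSystem

/-! ### Linking numbers -/

/-- The effect of `s i` on an ordered pair of strand positions `(a, b)` with a counter `t`:
the positions are swapped according to `(i, i+1)`, and the counter goes up by one exactly when
`a = i` and `b = i + 1`, that is, when the first strand crosses the second one from the left.
Counting only these crossings makes a full twist contribute `1` instead of `2`, so that no
division by two is needed. -/
def crossing (i : ℕ) : Perm (ℕ × ℕ × ℤ) where
  toFun x := (swap i (i + 1) x.1, swap i (i + 1) x.2.1,
    x.2.2 + if x.1 = i ∧ x.2.1 = i + 1 then 1 else 0)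
  invFun x := (swap i (i + 1) x.1, swap i (i + 1) x.2.1,
    x.2.2 - if x.1 = i + 1 ∧ x.2.1 = i then 1 else 0)
  left_inv := by
    rintro ⟨a, b, t⟩
    simp only [swap_apply_self, swap_apply_eq_iff, swap_apply_left, swap_apply_right,
      add_sub_cancel_right]
  right_inv := by
    rintro ⟨a, b, t⟩
    simp only [swap_apply_self, swap_apply_eq_iff, swap_apply_left, swap_apply_right,
      sub_add_cancel]

lemma crossing_apply (i a b : ℕ) (t : ℤ) : crossing i (a, b, t) =
    (swap i (i + 1) a, swap i (i + 1) b, t + if a = i ∧ b = i + 1 then 1 else 0) := rfl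

lemma crossing_comm {i j : ℕ} (h : i + 2 ≤ j) :
    crossing i * crossing j = crossing j * crossing i := by
  ext1 ⟨a, b, t⟩
  have cases (x : ℕ) : x = i ∨ x = i + 1 ∨ x = j ∨ x = j + 1 ∨
      (x ≠ i ∧ x ≠ i + 1 ∧ x ≠ j ∧ x ≠ j + 1) := by omega
  have h1 : i ≠ j := by omega
  have h2 : i + 1 ≠ j := by omega
  have h3 : i ≠ j + 1 := by omega
  simp only [Perm.mul_apply, crossing_apply, swap_apply_def]
  rcases cases a with rfl | rfl | rfl | rfl | ha <;>
  rcases cases b with hb | hb | hb | hb | hb <;>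
  simp [*, h1.symm, h2.symm, h3.symm]

lemma crossing_braid (i : ℕ) :
    crossing i * crossing (i + 1) * crossing i =
      crossing (i + 1) * crossing i * crossing (i + 1) := by
  ext1 ⟨a, b, t⟩
  have cases (x : ℕ) : x = i ∨ x = i + 1 ∨ x = i + 2 ∨
      (x ≠ i ∧ x ≠ i + 1 ∧ x ≠ i + 2) := by omega
  have h1 : i + 1 + 1 = i + 2 := rfl
  have h2 : i ≠ i + 2 := by omega
  simp only [Perm.mul_apply, crossing_apply, swap_apply_def, h1]
  rcases cases a with rfl | rfl | rfl | ha <;>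
  rcases cases b with hb | hb | hb | hb <;>
  simp [*]

namespace ArtinSystem

variable {G : Type*} [Group G] {M : ℕ} (A : ArtinSystem G M)

/-- The action on counters by `Θ` is by translations depending only on the pair of positions. -/
lemma exists_shift (Θ : G →* Perm (ℕ × ℕ × ℤ)) (hΘ : ∀ i < M, Θ (A.s i) = crossing i)
    (g : G) : ∀ a b : ℕ, ∃ c : ℤ, ∀ t,
    Θ g (a, b, t) = (A.perm g a, A.perm g b, t + c) := by
  have hg : g ∈ Subgroup.closure {g | ∃ i < M, g = A.s i} := by rw [A.gen]; trivial
  induction hg using Subgroup.closure_induction with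
  | mem g hg =>
    obtain ⟨i, hi, rfl⟩ := hg
    intro a b
    rw [hΘ i hi, A.perm_s i hi]
    exact ⟨_, fun t => crossing_apply i a b t⟩
  | one => exact fun a b => ⟨0, by simp⟩
  | mul g k _ _ hg hk =>
    intro a b
    obtain ⟨c, hc⟩ := hk a b
    obtain ⟨d, hd⟩ := hg (A.perm k a) (A.perm k b)
    exact ⟨c + d, fun t => by simp [hc, hd, add_assoc]⟩
  | inv g _ hg =>
    intro a b
    obtain ⟨c, hc⟩ := hg (A.perm g⁻¹ a) (A.perm g⁻¹ b)
    refine ⟨-c, fun t => ?_⟩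
    rw [map_inv, Perm.inv_eq_iff_eq, hc]
    simp

lemma ker_apply (Θ : G →* Perm (ℕ × ℕ × ℤ)) (hΘ : ∀ i < M, Θ (A.s i) = crossing i)
    {p : G} (hp : p ∈ A.perm.ker) (a b : ℕ) (t : ℤ) :
    Θ p (a, b, t) = (a, b, t + (Θ p (a, b, 0)).2.2) := by
  obtain ⟨c, hc⟩ := A.exists_shift Θ hΘ p a b
  have hp' : A.perm p = 1 := hp
  simp [hc, hp']

/-- The homomorphism recording all linking numbers of a pure braid. The pairs of strands `a < b`
are encoded as the dependent pairs `⟨b, a⟩` with `b : Fin (M + 1)` and `a : Fin b`. -/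
def linking (Θ : G →* Perm (ℕ × ℕ × ℤ)) (hΘ : ∀ i < M, Θ (A.s i) = crossing i) : A.perm.ker →* Multiplicative (((b : Fin (M + 1)) × Fin b) → ℤ) where
  toFun p := Multiplicative.ofAdd fun x => (Θ p (x.2, x.1, 0)).2.2
  map_one' := by
    apply Multiplicative.toAdd.injective
    funext x
    simp
  map_mul' p q := by
    apply Multiplicative.toAdd.injective
    funext x
    have h1 := A.ker_apply Θ hΘ q.2 x.2 x.1 0
    have h2 := A.ker_apply Θ hΘ p.2 x.2 x.1 (Θ q (x.2, x.1, 0)).2.2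
    simp only [Subgroup.coe_mul, map_mul, Perm.mul_apply, toAdd_ofAdd, toAdd_mul, Pi.add_apply]
    rw [h1, zero_add, h2]
    exact add_comm _ _

/-- A full twist links exactly the two strands that it twists, with linking number one. -/
lemma twist_apply (Θ : G →* Perm (ℕ × ℕ × ℤ)) (hΘ : ∀ i < M, Θ (A.s i) = crossing i)
    (g : G) {i : ℕ} (hi : i < M) (a b : ℕ) :
    (Θ (A.twist g hi) (a, b, 0)).2.2 =
      if s(a, b) = s(A.perm g i, A.perm g (i + 1)) then 1 else 0 := by
  obtain ⟨a, rfl⟩ := (A.perm g).surjective a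
  obtain ⟨b, rfl⟩ := (A.perm g).surjective b
  obtain ⟨c, hc⟩ := A.exists_shift Θ hΘ g a b
  have h1 : Θ g⁻¹ (A.perm g a, A.perm g b, 0) = (a, b, -c) := by
    rw [map_inv, Perm.inv_eq_iff_eq, hc, neg_add_cancel]
  have h2 : ∀ t, Θ (A.s i * A.s i) (a, b, t) =
      (a, b, t + if s(a, b) = s(i, i + 1) then 1 else 0) := by
    intro t
    simp only [map_mul, Perm.mul_apply, hΘ i hi, crossing_apply, swap_apply_self,
      swap_apply_eq_iff, swap_apply_left, swap_apply_right, Sym2.eq_iff]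
    by_cases h : a = i <;> by_cases h' : b = i <;> simp [h, h']
  change (Θ (g * (A.s i * A.s i) * g⁻¹) (A.perm g a, A.perm g b, 0)).2.2 = _
  rw [map_mul, map_mul, Perm.mul_apply, Perm.mul_apply, h1, h2, hc]
  simp only [Sym2.eq_iff, (A.perm g).apply_eq_iff_eq]
  ring

lemma exists_pair (g : G) {i : ℕ} (hi : i < M) :
    ∃ x : (b : Fin (M + 1)) × Fin b,
      s((x.2 : ℕ), (x.1 : ℕ)) = s(A.perm g i, A.perm g (i + 1)) := by
  have h1 := A.perm_le g (x := i) (by omega)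
  have h2 := A.perm_le g (x := i + 1) (by omega)
  have h3 : A.perm g i ≠ A.perm g (i + 1) := fun h => by
    have := (A.perm g).injective h
    omega
  rcases Nat.lt_or_gt_of_ne h3 with h | h
  · exact ⟨⟨⟨A.perm g (i + 1), by omega⟩, ⟨A.perm g i, h⟩⟩, rfl⟩
  · exact ⟨⟨⟨A.perm g i, by omega⟩, ⟨A.perm g (i + 1), h⟩⟩, Sym2.eq_swap⟩

lemma pair_injective (x y : (b : Fin (M + 1)) × Fin b) :
    s((x.2 : ℕ), (x.1 : ℕ)) = s((y.2 : ℕ), (y.1 : ℕ)) ↔ x = y := by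
  constructor
  · obtain ⟨⟨b, hb⟩, ⟨a, ha⟩⟩ := x
    obtain ⟨⟨d, hd⟩, ⟨c, hc⟩⟩ := y
    simp only [Sym2.eq_iff] at *
    rintro (⟨rfl, rfl⟩ | ⟨rfl, rfl⟩)
    · rfl
    · exact absurd ha hc.not_gt
  · rintro rfl; rfl

lemma linking_twist (Θ : G →* Perm (ℕ × ℕ × ℤ)) (hΘ : ∀ i < M, Θ (A.s i) = crossing i)
    (g : G) {i : ℕ} (hi : i < M) (x : (b : Fin (M + 1)) × Fin b)
    (hx : s((x.2 : ℕ), (x.1 : ℕ)) = s(A.perm g i, A.perm g (i + 1))) :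
    A.linking Θ hΘ (A.twist g hi) = Multiplicative.ofAdd (Pi.single x 1) := by
  apply Multiplicative.toAdd.injective
  funext y
  change (Θ (A.twist g hi) (y.2, y.1, 0)).2.2 = _
  rw [A.twist_apply Θ hΘ, ← hx]
  simp only [pair_injective, toAdd_ofAdd, Pi.single_apply]

/-- The linking numbers identify the abelianization of the kernel with `ℤ^{pairs a < b}`. -/
theorem abelianization_ker (Θ : G →* Perm (ℕ × ℕ × ℤ)) (hΘ : ∀ i < M, Θ (A.s i) = crossing i) :
    Nonempty (Abelianization A.perm.ker ≃*
      Multiplicative (((b : Fin (M + 1)) × Fin b) → ℤ)) := by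
  have hex : ∀ x : (b : Fin (M + 1)) × Fin b, ∃ (g : G) (i : ℕ), i < M ∧
      s((x.2 : ℕ), (x.1 : ℕ)) = s(A.perm g i, A.perm g (i + 1)) := fun x => by
    obtain ⟨g, i, hi, h1, h2⟩ := A.exists_perm_eq (a := x.2) (b := x.1) x.2.2 (by omega)
    exact ⟨g, i, hi, by rw [h1, h2]⟩
  choose g i hi hx using hex
  let r x : Abelianization A.perm.ker := Abelianization.of (A.twist (g x) (hi x))
  let ψ : Multiplicative (((b : Fin (M + 1)) × Fin b) → ℤ) →* Abelianization A.perm.ker :=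
    { toFun := fun f => ∏ x, r x ^ (Multiplicative.toAdd f x)
      map_one' := by simp
      map_mul' := fun f f' => by simp [zpow_add, Finset.prod_mul_distrib] }
  have hψ : ∀ x, ψ (Multiplicative.ofAdd (Pi.single x 1)) = r x := fun x => by
    change ∏ y, r y ^ (Pi.single x (1 : ℤ) : _ → ℤ) y = r x
    rw [Finset.prod_eq_single x] <;> simp +contextual
  have e1 : ψ.comp (Abelianization.lift (A.linking Θ hΘ)) = MonoidHom.id _ := by
    apply Abelianization.hom_ext
    apply A.ker_hom_ext
    intro k j hj
    obtain ⟨x, hx'⟩ := A.exists_pair k hj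
    simp only [MonoidHom.comp_apply, Abelianization.lift_apply_of, MonoidHom.id_apply]
    rw [A.linking_twist Θ hΘ k hj x hx', hψ]
    exact A.of_twist_eq _ _ ((hx x).symm.trans hx')
  have e2 : (Abelianization.lift (A.linking Θ hΘ)).comp ψ = MonoidHom.id _ := by
    refine MonoidHom.ext fun f => ?_
    have hr : ∀ x, Abelianization.lift (A.linking Θ hΘ) (r x) =
        Multiplicative.ofAdd (Pi.single x 1) := fun x => by
      rw [Abelianization.lift_apply_of]
      exact A.linking_twist Θ hΘ _ (hi x) x (hx x)
    change Abelianization.lift (A.linking Θ hΘ) (∏ x, r x ^ (Multiplicative.toAdd f x)) = f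
    simp only [map_prod, map_zpow, hr]
    apply Multiplicative.toAdd.injective
    funext y
    simp [toAdd_prod, Finset.sum_apply, Pi.single_apply]
  exact ⟨MonoidHom.toMulEquiv _ _ e1 e2⟩

end ArtinSystem

/-! ### The braid group -/

theorem BraidGroup.comm' (M : ℕ) (i j : Fin M) (h : (i : ℕ) + 2 ≤ j) :
    (PresentedGroup.of i * PresentedGroup.of j : PresentedGroup (braidRels M)) =
      PresentedGroup.of j * PresentedGroup.of i := by
  have := PresentedGroup.mk_eq_one (rels := braidRels M) (Or.inl ⟨i, j, Or.inl h, rfl⟩)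
  simp only [map_mul, map_inv] at this
  rw [mul_inv_eq_one, mul_inv_eq_iff_eq_mul] at this
  exact this

theorem BraidGroup.braid' (M : ℕ) (i j : Fin M) (h : (i : ℕ) + 1 = j) :
    (PresentedGroup.of i * PresentedGroup.of j * PresentedGroup.of i :
      PresentedGroup (braidRels M)) =
      PresentedGroup.of j * PresentedGroup.of i * PresentedGroup.of j := by
  have := PresentedGroup.mk_eq_one (rels := braidRels M) (Or.inr ⟨i, j, h, rfl⟩)
  simp only [map_mul, map_inv] at this
  rw [mul_inv_eq_one] at this
  exact this

/-- The action of the braid group on ordered pairs of positions with counter. -/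
def crossingHom (M : ℕ) : PresentedGroup (braidRels M) →* Perm (ℕ × ℕ × ℤ) :=
  PresentedGroup.toGroup (f := fun i : Fin M => crossing i) (by
    rintro _ (⟨i, j, h, rfl⟩ | ⟨i, j, h, rfl⟩)
    · simp only [map_mul, map_inv, FreeGroup.lift_apply_of]
      rw [mul_inv_eq_one, mul_inv_eq_iff_eq_mul]
      rcases h with h | h
      · exact crossing_comm h
      · exact (crossing_comm h).symm
    · simp only [map_mul, map_inv, FreeGroup.lift_apply_of, ← h]
      exact mul_inv_eq_one.2 (crossing_braid i))

/-- The braid group on `M + 1` strands as an `ArtinSystem`, with the permutations of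
`Fin (M + 1)` extended by the identity to `ℕ`. -/
noncomputable def braidSystem (M : ℕ) (π : BraidGroup (M + 1) →* Perm (Fin (M + 1)))
    (hπ : SendsGenToTransposition (M + 1) π) : ArtinSystem (BraidGroup (M + 1)) M where
  s i := if h : i < M then PresentedGroup.of ⟨i, h⟩ else 1
  comm i j hi hj h := by
    simp only [hi, hj, dif_pos]
    exact BraidGroup.comm' M _ _ h
  braid i hi := by
    simp only [hi, Nat.lt_of_succ_lt hi, dif_pos]
    exact BraidGroup.braid' M _ _ rfl
  gen := by
    rw [eq_top_iff, ← PresentedGroup.closure_range_of]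
    apply Subgroup.closure_mono
    rintro _ ⟨i, rfl⟩
    exact ⟨i, i.2, by simp⟩
  perm := (Perm.viaEmbeddingHom Fin.valEmbedding).comp π
  perm_s i hi := by
    simp only [hi, dif_pos, MonoidHom.comp_apply, Perm.viaEmbeddingHom_apply]
    rw [show π (PresentedGroup.of ⟨i, hi⟩) = _ from hπ ⟨i, hi⟩]
    ext x
    by_cases hx : x < M + 1
    · have := Perm.viaEmbedding_apply (swap (⟨i, by omega⟩ : Fin (M + 1)) ⟨i + 1, by omega⟩)
        Fin.valEmbedding ⟨x, hx⟩
      refine this.trans ?_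
      simp only [swap_apply_def, Fin.ext_iff, Fin.valEmbedding_apply]
      split_ifs <;> rfl
    · rw [Perm.viaEmbedding_apply_of_notMem, swap_apply_of_ne_of_ne (by omega) (by omega)]
      rintro ⟨y, rfl⟩
      exact hx y.2

/-- For every `n ≥ 1`, the abelianization of the pure braid group `P_n` — the kernel of
the homomorphism `π : B_n → S_n` sending each Artin generator to the corresponding
adjacent transposition — is free abelian of rank `n(n-1)/2`, i.e. isomorphic to
`ℤ^(n choose 2)`. -/
theorem pure_braid_abelianization (n : ℕ) (hn : 1 ≤ n)
    (π : BraidGroup n →* Equiv.Perm (Fin n)) (hπ : SendsGenToTransposition n π) :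
    Nonempty (Abelianization π.ker ≃* Multiplicative (Fin (n.choose 2) → ℤ)) := by
  obtain ⟨M, rfl⟩ : ∃ M, n = M + 1 := ⟨n - 1, by omega⟩
  let A := braidSystem M π hπ
  have hker : A.perm.ker = π.ker := by
    ext g
    change Perm.viaEmbeddingHom Fin.valEmbedding (π g) = 1 ↔ π g = 1
    rw [map_eq_one_iff _ (Perm.viaEmbeddingHom_injective _)]
  obtain ⟨e⟩ := A.abelianization_ker (crossingHom M) (fun i hi => by
    change crossingHom M (if h : i < M then PresentedGroup.of ⟨i, h⟩ else 1) = _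
    rw [dif_pos hi]
    exact PresentedGroup.toGroup.of _)
  have hcard : Fintype.card ((b : Fin (M + 1)) × Fin b) = (M + 1).choose 2 := by
    rw [Fintype.card_sigma]
    simp only [Fintype.card_fin]
    rw [Fin.sum_univ_eq_sum_range (fun i => i), Finset.sum_range_id, Nat.choose_two_right]
  let r : (((b : Fin (M + 1)) × Fin b) → ℤ) ≃+ (Fin ((M + 1).choose 2) → ℤ) :=
    AddEquiv.arrowCongr (Fintype.equivFinOfCardEq hcard) (AddEquiv.refl ℤ)
  rw [← hker]
  exact ⟨e.trans r.toMultiplicative⟩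
end

section
/- For every n ≥ 1, the stabilization homomorphism s_n : B_n → B_{n+1} sending each Artin generator σ_i of B_n to the generator σ_i of B_{n+1} is injective. -/
namespace BraidStab

/-- The generator `σ_j` (0-indexed) of the braid group with `m` generators, and `1` if `j` is out of
range. -/
def gen (m j : ℕ) : PresentedGroup (braidRels m) :=
  if h : j < m then PresentedGroup.of ⟨j, h⟩ else 1

theorem gen_comm (m i j : ℕ) (h : i + 2 ≤ j) : gen m i * gen m j = gen m j * gen m i := by
  unfold gen
  split_ifs with hi hj <;> try simp
  have := PresentedGroup.mk_eq_one (rels := braidRels m)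
    (Or.inl ⟨⟨i, hi⟩, ⟨j, hj⟩, Or.inl h, rfl⟩)
  simp only [map_mul, map_inv] at this
  exact (mul_inv_eq_iff_eq_mul.1 (mul_inv_eq_one.1 this))

theorem gen_braid (m i : ℕ) (h : i + 1 < m) :
    gen m i * gen m (i + 1) * gen m i = gen m (i + 1) * gen m i * gen m (i + 1) := by
  unfold gen
  rw [dif_pos h, dif_pos (by omega : i < m)]
  have := PresentedGroup.mk_eq_one (rels := braidRels m)
    (Or.inr ⟨⟨i, by omega⟩, ⟨i + 1, h⟩, rfl, rfl⟩)
  rw [map_mul, map_inv, mul_inv_eq_one] at this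
  simp only [map_mul] at this
  exact this

/-- The effect of a crossing of the strands at positions `i` and `i + 1` on a pair `(b, k)`, where
`k` is the position of the deleted strand and `b` the braid formed by the others. The map `c` gives
the crossings of the smaller braid group (`gen m`, or its inverse for the inverse crossing). The
positions are `0, …, m + 1`; pairs with `k` beyond that are left alone. -/
def delStep {B : Type*} [Group B] (m : ℕ) (c : ℕ → B) (i : ℕ) (p : B × ℕ) : B × ℕ :=
  if m + 1 < p.2 then p
  else if p.2 = i then (p.1, i + 1)
  else if p.2 = i + 1 then (p.1, i)
  else if p.2 < i then (c (i - 1) * p.1, p.2)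
  else (c i * p.1, p.2)

section
variable {B : Type*} [Group B] {m : ℕ} (c : ℕ → B) {i : ℕ} (b : B) {k : ℕ}

theorem delStep_out (h : m + 1 < k) : delStep m c i (b, k) = (b, k) := by
  simp [delStep, h]

theorem delStep_left (h : i ≤ m) : delStep m c i (b, i) = (b, i + 1) := by
  simp [delStep, show ¬ m + 1 < i by omega]

theorem delStep_right (h : i ≤ m) : delStep m c i (b, i + 1) = (b, i) := by
  simp [delStep, show ¬ m < i by omega]

theorem delStep_lt (h : i ≤ m) (hk : k < i) :
    delStep m c i (b, k) = (c (i - 1) * b, k) := by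
  simp [delStep, show ¬ m + 1 < k by omega, show k ≠ i by omega, show k ≠ i + 1 by omega, hk]

theorem delStep_gt (hk : i + 1 < k) (hm : k ≤ m + 1) :
    delStep m c i (b, k) = (c i * b, k) := by
  simp [delStep, show ¬ m + 1 < k by omega, show k ≠ i by omega, show k ≠ i + 1 by omega,
    show ¬ k < i by omega]

end

theorem delStep_cancel {B : Type*} [Group B] {m : ℕ} (c d : ℕ → B) (hcd : ∀ j, c j * d j = 1)
    {i : ℕ} (hi : i ≤ m) (p : B × ℕ) : delStep m c i (delStep m d i p) = p := by
  obtain ⟨b, k⟩ := p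
  rcases lt_or_ge (m + 1) k with h | h
  · rw [delStep_out _ _ h, delStep_out _ _ h]
  rcases lt_trichotomy k i with h1 | rfl | h1
  · rw [delStep_lt _ _ hi h1, delStep_lt _ _ hi h1, ← mul_assoc, hcd, one_mul]
  · rw [delStep_left _ _ hi, delStep_right _ _ hi]
  rcases eq_or_lt_of_le (Nat.succ_le_of_lt h1) with rfl | h2
  · rw [delStep_right _ _ hi, delStep_left _ _ hi]
  · rw [delStep_gt _ _ h2 h, delStep_gt _ _ h2 h, ← mul_assoc, hcd, one_mul]

theorem delStep_comm {m i j : ℕ} (hij : i + 2 ≤ j) (hj : j ≤ m)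
    (p : PresentedGroup (braidRels m) × ℕ) :
    delStep m (gen m) i (delStep m (gen m) j p) = delStep m (gen m) j (delStep m (gen m) i p) := by
  have hi : i ≤ m := by omega
  obtain ⟨b, k⟩ := p
  rcases lt_or_ge (m + 1) k with h | h
  · simp only [delStep_out _ _ h]
  rcases lt_trichotomy k i with h1 | rfl | h1
  · have h2 : k < j := by omega
    simp only [delStep_lt _ _ hi h1, delStep_lt _ _ hj h2, ← mul_assoc]
    rw [gen_comm m (i - 1) (j - 1) (by omega)]
  · rw [delStep_left _ _ hi, delStep_lt _ _ hj (by omega), delStep_lt _ _ hj (by omega),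
      delStep_left _ _ hi]
  rcases eq_or_lt_of_le (Nat.succ_le_of_lt h1) with rfl | h2
  · simp only [Nat.succ_eq_add_one]
    rw [delStep_right _ _ hi, delStep_lt _ _ hj (by omega), delStep_lt _ _ hj (by omega),
      delStep_right _ _ hi]
  have h2 : i + 1 < k := h2
  rcases lt_trichotomy k j with h3 | rfl | h3
  · simp only [delStep_gt _ _ h2 h, delStep_lt _ _ hj h3, ← mul_assoc]
    -- the deleted strand lies strictly between the two crossings, `i + 1 < k < j`, which leaves
    -- room for `σ_j` to become `σ_{j-1}` and still be far from `σ_i`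
    rw [gen_comm m i (j - 1) (by omega)]
  · rw [delStep_left _ _ hj, delStep_gt _ _ (by omega) (by omega), delStep_gt _ _ h2 h,
      delStep_left _ _ hj]
  rcases eq_or_lt_of_le (Nat.succ_le_of_lt h3) with rfl | h4
  · simp only [Nat.succ_eq_add_one]
    simp only [delStep_right _ _ hj, delStep_gt _ _ (show i + 1 < j by omega) (show j ≤ m + 1 by omega),
      delStep_gt _ _ (show i + 1 < j + 1 by omega) h]
  · have h4 : j + 1 < k := h4
    simp only [delStep_gt _ _ h2 h, delStep_gt _ _ h4 h, ← mul_assoc]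
    rw [gen_comm m i j hij]

theorem delStep_braid {m i : ℕ} (hj : i + 1 ≤ m) (p : PresentedGroup (braidRels m) × ℕ) :
    delStep m (gen m) i (delStep m (gen m) (i + 1) (delStep m (gen m) i p)) =
      delStep m (gen m) (i + 1) (delStep m (gen m) i (delStep m (gen m) (i + 1) p)) := by
  have hi : i ≤ m := by omega
  obtain ⟨b, k⟩ := p
  rcases lt_or_ge (m + 1) k with h | h
  · simp only [delStep_out _ _ h]
  rcases lt_trichotomy k i with h1 | rfl | h1
  · have h2 : k < i + 1 := by omega
    simp only [delStep_lt _ _ hi h1, delStep_lt _ _ hj h2, ← mul_assoc]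
    obtain ⟨l, rfl⟩ : ∃ l, i = l + 1 := ⟨i - 1, by omega⟩
    simp only [Nat.add_sub_cancel]
    rw [gen_braid m l (by omega)]
  -- the deleted strand takes part in the triple crossing: both sides reduce to the single
  -- crossing `σ_i` of the two other strands
  · simp only [delStep_left _ _ hi, delStep_left _ _ hj, delStep_lt _ _ hj (Nat.lt_succ_self k),
      delStep_gt _ _ (Nat.lt_succ_self (k + 1)) (Nat.succ_le_succ hj), Nat.add_sub_cancel]
  obtain rfl | rfl | h2 : k = i + 1 ∨ k = i + 1 + 1 ∨ i + 1 + 1 < k := by omega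
  · simp only [delStep_left _ _ hi, delStep_left _ _ hj, delStep_right _ _ hi, delStep_right _ _ hj,
      delStep_lt _ _ hj (Nat.lt_succ_self i),
      delStep_gt _ _ (Nat.lt_succ_self (i + 1)) (Nat.succ_le_succ hj), Nat.add_sub_cancel]
  · simp only [delStep_right _ _ hi, delStep_right _ _ hj, delStep_lt _ _ hj (Nat.lt_succ_self i),
      delStep_gt _ _ (Nat.lt_succ_self (i + 1)) h, Nat.add_sub_cancel]
  · have h3 : i + 1 < k := by omega
    simp only [delStep_gt _ _ h3 h, delStep_gt _ _ h2 h, ← mul_assoc]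
    rw [gen_braid m i (by omega)]

/-- The permutation of pairs given by the crossing `σ_i` of the larger braid group. -/
def delPerm (m : ℕ) (i : Fin (m + 1)) : Equiv.Perm (PresentedGroup (braidRels m) × ℕ) where
  toFun := delStep m (gen m) i
  invFun := delStep m (fun j => (gen m j)⁻¹) i
  left_inv := delStep_cancel _ _ (fun _ => inv_mul_cancel _) (Nat.le_of_lt_succ i.2)
  right_inv := delStep_cancel _ _ (fun _ => mul_inv_cancel _) (Nat.le_of_lt_succ i.2)

theorem delPerm_comm {m : ℕ} {i j : Fin (m + 1)} (h : (i : ℕ) + 2 ≤ j) :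
    delPerm m i * delPerm m j = delPerm m j * delPerm m i :=
  Equiv.ext (delStep_comm h (Nat.le_of_lt_succ j.2))

/-- The strand-deletion action of the larger braid group. -/
def delHom (m : ℕ) :
    PresentedGroup (braidRels (m + 1)) →* Equiv.Perm (PresentedGroup (braidRels m) × ℕ) :=
  PresentedGroup.toGroup (f := delPerm m) (by
    rintro r (⟨i, j, hij, rfl⟩ | ⟨i, j, hij, rfl⟩)
    · simp only [map_mul, map_inv, FreeGroup.lift_apply_of]
      rw [mul_inv_eq_one, mul_inv_eq_iff_eq_mul]
      exact hij.elim delPerm_comm fun h => (delPerm_comm h).symm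
    · simp only [map_mul, map_inv, FreeGroup.lift_apply_of]
      rw [mul_inv_eq_one]
      refine Equiv.ext fun p => ?_
      have := delStep_braid (m := m) (i := i) (by omega) p
      rw [hij] at this
      exact this)

/-- Deleting the last strand of a stabilized braid recovers the braid. -/
theorem delHom_braidStab (m : ℕ) (x : BraidGroup (m + 1)) :
    ∀ b : BraidGroup (m + 1), delHom m (braidStab (m + 1) x) (b, m + 1) = (x * b, m + 1) := by
  have hx : x ∈ Subgroup.closure (Set.range (PresentedGroup.of (rels := braidRels m))) := by
    rw [PresentedGroup.closure_range_of]
    trivial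
  induction hx using Subgroup.closure_induction with
  | mem x hx =>
    obtain ⟨i, rfl⟩ := hx
    intro b
    have h1 : braidStab (m + 1) (PresentedGroup.of (rels := braidRels m) i) =
        PresentedGroup.of (rels := braidRels (m + 1)) (Fin.castLE (Nat.le_succ m) i) :=
      PresentedGroup.toGroup.of _
    have h2 : delHom m (PresentedGroup.of (Fin.castLE (Nat.le_succ m) i)) =
        delPerm m (Fin.castLE (Nat.le_succ m) i) := PresentedGroup.toGroup.of _
    rw [h1, h2]
    refine (delStep_gt (gen m) b (i := i) (by omega) le_rfl).trans ?_
    simp [gen]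
  | one => intro b; simp
  | mul x y _ _ hx hy =>
    intro b
    rw [map_mul, map_mul, Equiv.Perm.mul_apply, hy, hx, mul_assoc]
  | inv x _ hx =>
    intro b
    rw [map_inv, map_inv, Equiv.Perm.inv_eq_iff_eq, hx, mul_inv_cancel_left]

end BraidStab

/-- For every `n ≥ 1`, the stabilization homomorphism `s_n : B_n → B_{n+1}`, sending each
Artin generator `σ_i` of `B_n` to the generator `σ_i` of `B_{n+1}`, is injective. -/
theorem braidStab_injective (n : ℕ) (hn : 1 ≤ n) : Function.Injective (braidStab n) := by
  obtain ⟨m, rfl⟩ : ∃ m, n = m + 1 := ⟨n - 1, by omega⟩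
  intro x y hxy
  have hx := BraidStab.delHom_braidStab m x 1
  rw [hxy, BraidStab.delHom_braidStab m y 1] at hx
  simpa using (congrArg Prod.fst hx).symm
end

section
/- Let M be a nonempty connected topological manifold of dimension d ≥ 2 (a Hausdorff, second-countable space locally homeomorphic to ℝ^d). Then for every n ≥ 0 the ordered configuration space F_n(M) is path-connected. -/
/-!
Two configurations are joined by moving one point at a time. Moving a single point while the others
stay put is possible because the complement of a finite set `S` in `M` is path-connected
(`joinedIn_compl_finite`): each chart domain minus `S` is path-connected, being homeomorphic to `ℝ^d`
minus a finite set with `d ≥ 2`, and these pieces are glued together by a clopen argument, in which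
two overlapping open sets still meet outside `S` because nonempty open subsets of `M` are infinite.

If `x` and `y` have disjoint ranges, replacing the coordinates `x i` by `y i` successively never
creates a collision, so `x` and `y` are joined. In general, pass through a third configuration
disjoint from both, which exists because `M` is infinite.
-/

open Set Topology

namespace ConfigurationSpace

variable {M : Type*} [TopologicalSpace M]

theorem one_lt_rank {d : ℕ} (hd : 2 ≤ d) : 1 < Module.rank ℝ (EuclideanSpace ℝ (Fin d)) := by
  rw [← Module.finrank_eq_rank, finrank_euclideanSpace_fin]
  exact_mod_cast hd

theorem isPathConnected_chart_diff {d : ℕ} (hd : 2 ≤ d) {U : Set M}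
    (φ : U ≃ₜ EuclideanSpace ℝ (Fin d)) {S : Set M} (hS : S.Finite) :
    IsPathConnected (U \ S) := by
  have hfin : (φ '' (Subtype.val ⁻¹' S)).Finite :=
    (hS.preimage Subtype.val_injective.injOn).image φ
  have h := (hfin.countable.isPathConnected_compl_of_one_lt_rank (one_lt_rank hd)).image
    (continuous_subtype_val.comp φ.symm.continuous)
  convert h using 1
  ext p
  constructor
  · rintro ⟨hpU, hpS⟩
    refine ⟨φ ⟨p, hpU⟩, ?_, by simp⟩
    rintro ⟨q, hq, hqp⟩
    rw [φ.injective hqp] at hq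
    exact hpS hq
  · rintro ⟨v, hv, rfl⟩
    refine ⟨(φ.symm v).2, fun hs => hv ⟨φ.symm v, hs, by simp⟩⟩

theorem punctured_nhds_neBot {d : ℕ} (hd : 2 ≤ d) {U : Set M}
    (φ : U ≃ₜ EuclideanSpace ℝ (Fin d)) {p : M} (hp : p ∈ U) : (𝓝[≠] p).NeBot := by
  by_contra hne
  rw [Filter.not_neBot, ← isOpen_singleton_iff_punctured_nhds] at hne
  have : Nontrivial (EuclideanSpace ℝ (Fin d)) :=
    rank_pos_iff_nontrivial.1 (zero_lt_one.trans (one_lt_rank hd))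
  have hneBot : (𝓝[≠] (φ ⟨p, hp⟩)).NeBot := Module.punctured_nhds_neBot ℝ _ _
  refine not_isOpen_singleton (φ ⟨p, hp⟩) ?_
  have h := φ.isOpenMap _ (hne.preimage continuous_subtype_val)
  convert h using 1
  ext v
  constructor
  · rintro rfl
    exact ⟨⟨p, hp⟩, rfl, rfl⟩
  · rintro ⟨⟨q, hq⟩, hqp, rfl⟩
    have : q = p := hqp
    subst this
    rfl

/-- In a connected manifold of dimension at least two, any two points outside a finite set are
joined by a path avoiding that set. -/
theorem joinedIn_compl_finite [T2Space M] [ConnectedSpace M] {d : ℕ} (hd : 2 ≤ d)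
    (charts : ∀ x : M, ∃ U : Set M, IsOpen U ∧ x ∈ U ∧
      Nonempty (U ≃ₜ EuclideanSpace ℝ (Fin d)))
    {S : Set M} (hS : S.Finite) {a b : M} (ha : a ∉ S) (hb : b ∉ S) : JoinedIn Sᶜ a b := by
  -- The set of points near which everything outside `S` can be reached from `a`; points of `S`
  -- themselves are allowed in it, which makes it a clopen subset of the whole of `M`.
  let A : Set M := {p | ∃ V : Set M, IsOpen V ∧ p ∈ V ∧ ∀ c ∈ V \ S, JoinedIn Sᶜ a c}
  have hsub : ∀ U : Set M, U \ S ⊆ Sᶜ := fun U c hc => hc.2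
  have hopen : IsOpen A := by
    rw [isOpen_iff_forall_mem_open]
    rintro p ⟨V, hV, hpV, h⟩
    exact ⟨V, fun q hq => ⟨V, hV, hq, h⟩, hV, hpV⟩
  have hclosed : IsClosed A := by
    refine isClosed_of_closure_subset fun p hp => ?_
    obtain ⟨U, hU, hpU, ⟨φ⟩⟩ := charts p
    obtain ⟨q, hqU, V, hV, hqV, h⟩ := mem_closure_iff.1 hp U hU hpU
    have := punctured_nhds_neBot hd φ hqU
    have hinf : (U ∩ V).Infinite := infinite_of_mem_nhds q ((hU.inter hV).mem_nhds ⟨hqU, hqV⟩)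
    obtain ⟨r, ⟨hrU, hrV⟩, hrS⟩ := (hinf.sdiff hS).nonempty
    refine ⟨U, hU, hpU, fun c hc => (h r ⟨hrV, hrS⟩).trans ?_⟩
    exact ((isPathConnected_chart_diff hd φ hS).joinedIn r ⟨hrU, hrS⟩ c hc).mono (hsub U)
  have hne : A.Nonempty := by
    obtain ⟨U, hU, haU, ⟨φ⟩⟩ := charts a
    exact ⟨a, U, hU, haU, fun c hc =>
      ((isPathConnected_chart_diff hd φ hS).joinedIn a ⟨haU, ha⟩ c hc).mono (hsub U)⟩
  have huniv : A = univ := IsClopen.eq_univ ⟨hclosed, hopen⟩ hne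
  obtain ⟨V, -, hbV, h⟩ : b ∈ A := huniv ▸ mem_univ b
  exact h b ⟨hbV, hb⟩

/-- Configurations differing only in the coordinate `i` are joined as soon as the `i`-th point can
be moved along a path in `M` that avoids the other points. -/
theorem joined_update {n : ℕ} (x y : {x : Fin n → M // Function.Injective x}) (i : Fin n)
    (hy : ∀ j, j ≠ i → y.1 j = x.1 j)
    (h : JoinedIn (x.1 '' {i}ᶜ)ᶜ (x.1 i) (y.1 i)) : Joined x y := by
  obtain ⟨γ, hγ⟩ := h
  have hinj : ∀ t, Function.Injective (Function.update x.1 i (γ t)) := by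
    intro t
    have hne : ∀ j, j ≠ i → x.1 j ≠ γ t := fun j hj hjt => hγ t ⟨j, hj, hjt⟩
    intro j k hjk
    by_cases hj : j = i <;> by_cases hk : k = i
    · rw [hj, hk]
    · subst hj
      rw [Function.update_self, Function.update_of_ne hk] at hjk
      exact (hne k hk hjk.symm).elim
    · subst hk
      rw [Function.update_self, Function.update_of_ne hj] at hjk
      exact (hne j hj hjk).elim
    · rw [Function.update_of_ne hj, Function.update_of_ne hk] at hjk
      exact x.2 hjk
  refine ⟨⟨⟨fun t => ⟨Function.update x.1 i (γ t), hinj t⟩, ?_⟩, ?_, ?_⟩⟩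
  · exact (continuous_const.update i γ.continuous).subtype_mk _
  · apply Subtype.ext
    simp
  · apply Subtype.ext
    funext j
    by_cases hj : j = i
    · subst hj
      simp
    · simp [hj, hy j hj]

theorem joined_of_disjoint [T2Space M] [ConnectedSpace M] {d : ℕ} (hd : 2 ≤ d)
    (charts : ∀ x : M, ∃ U : Set M, IsOpen U ∧ x ∈ U ∧
      Nonempty (U ≃ₜ EuclideanSpace ℝ (Fin d)))
    {n : ℕ} (x y : {x : Fin n → M // Function.Injective x})
    (hxy : ∀ i j, x.1 i ≠ y.1 j) : Joined x y := by
  -- The mixed configuration with the coordinates in `s` already moved.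
  let mix : Finset (Fin n) → {x : Fin n → M // Function.Injective x} := fun s =>
    ⟨fun i => if i ∈ s then y.1 i else x.1 i, by
      intro i j hij
      by_cases hi : i ∈ s <;> by_cases hj : j ∈ s <;> simp only [hi, hj, if_true, if_false] at hij
      · exact y.2 hij
      · exact (hxy _ _ hij.symm).elim
      · exact (hxy _ _ hij).elim
      · exact x.2 hij⟩
  have hmix : ∀ s, Joined x (mix s) := by
    intro s
    induction s using Finset.induction_on with
    | empty =>
      have : mix ∅ = x := by
        apply Subtype.ext
        simp [mix]
      rw [this]
    | insert i s hi ih =>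
      refine ih.trans (joined_update _ _ i (fun j hj => by simp [mix, hj]) ?_)
      refine joinedIn_compl_finite hd charts (toFinite _) ?_ ?_
      · rintro ⟨j, hj, hji⟩
        exact hj ((mix s).2 hji)
      · rintro ⟨j, hj, hji⟩
        by_cases hjs : j ∈ s
        · simp only [mix, hjs, if_true, Finset.mem_insert_self] at hji
          exact hj (y.2 hji)
        · simp only [mix, hjs, if_false, Finset.mem_insert_self, if_true] at hji
          exact hxy _ _ hji
  have : mix Finset.univ = y := by
    apply Subtype.ext
    simp [mix]
  exact this ▸ hmix Finset.univ

theorem exists_config_avoiding {M : Type*} [Infinite M] (n : ℕ) {S : Set M} (hS : S.Finite) :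
    ∃ z : {x : Fin n → M // Function.Injective x}, ∀ i, z.1 i ∉ S := by
  have : Infinite (Sᶜ : Set M) := hS.infinite_compl.to_subtype
  let f := Infinite.natEmbedding (Sᶜ : Set M)
  exact ⟨⟨fun i => (f i : M), fun i j hij =>
    Fin.val_injective (f.injective (Subtype.val_injective hij))⟩, fun i => (f i).2⟩

end ConfigurationSpace

/-- Let `M` be a nonempty connected topological manifold of dimension `d ≥ 2`
(a Hausdorff, second-countable space in which every point has an open neighbourhood
homeomorphic to `ℝ^d`).  Then for every `n ≥ 0` the ordered configuration space
`F_n(M) = {x ∈ M^n : the coordinates of x are pairwise distinct}` is path-connected. -/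
theorem configuration_space_of_manifold_path_connected
    (d : ℕ) (hd : 2 ≤ d) (M : Type*) [TopologicalSpace M] [T2Space M]
    [SecondCountableTopology M] [ConnectedSpace M]
    (charts : ∀ x : M, ∃ U : Set M, IsOpen U ∧ x ∈ U ∧
      Nonempty (U ≃ₜ EuclideanSpace ℝ (Fin d)))
    (n : ℕ) :
    PathConnectedSpace {x : Fin n → M // Function.Injective x} := by
  have : Infinite M := by
    obtain ⟨p⟩ := (inferInstance : Nonempty M)
    obtain ⟨U, -, hpU, ⟨φ⟩⟩ := charts p
    have := ConfigurationSpace.punctured_nhds_neBot hd φ hpU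
    exact infinite_univ_iff.1 (infinite_of_mem_nhds p Filter.univ_mem)
  refine ⟨?_, fun x y => ?_⟩
  · obtain ⟨z, -⟩ := ConfigurationSpace.exists_config_avoiding (M := M) n finite_empty
    exact ⟨z⟩
  · obtain ⟨z, hz⟩ := ConfigurationSpace.exists_config_avoiding n
      ((finite_range x.1).union (finite_range y.1))
    refine (ConfigurationSpace.joined_of_disjoint hd charts x z fun i j h => ?_).trans
      (ConfigurationSpace.joined_of_disjoint hd charts z y fun i j h => ?_)
    · exact hz j (Or.inl ⟨i, h⟩)
    · exact hz i (Or.inr ⟨j, h.symm⟩)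
end

section
/- Let V be an FI-module over ℚ that is finitely generated in degree ≤ d. Then there exist a polynomial p ∈ ℚ[T] of degree at most d and an integer N such that for all n ≥ N, each V_n is a finite-dimensional ℚ-vector space with dim_ℚ(V_n) = p(n). -/
/-! The proof goes by induction on the generation degree through the derivative
`(DV)_n = V_{n+1} / im (V_n)`, which is generated in one degree less than `V`
(`FIModule.genLT_deriv`). If the maps `V_n → V_{n+1}` are injective for large `n`, then
`dim V_{n+1} - dim V_n = dim (DV)_n`, and a sequence whose differences are eventually polynomial
of degree `< d` is eventually polynomial of degree `≤ d` (`FIModule.exists_polynomial`).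

Eventual injectivity is a consequence of Noetherianity (`FIModule.exists_genLT`), which is proved
by the same induction. Let `U` be a sub-FI-module of `V` such that `V/U` is torsion-free in high
degrees. Generators of the image of `U` in `DV`, which exist in bounded degree by induction, lift
to `U`, and the remainder lies in `im (V_n) ∩ U_{n+1}`, which is the image of `U_n`; hence `U` is
generated in bounded degree (`FIModule.Sub.SatFrom.genLT`). For an arbitrary `U`, this applies
first to the preimage `T ⊇ U` of the torsion of `V/U`. As `T` is generated by finitely many
finite-dimensional pieces, each of which is eventually mapped into `U`, one gets `T_n = U_n` for
large `n` (`FIModule.Sub.satFrom_of_tors`). So `V/U` is torsion-free in high degrees and the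
argument applies to `U` itself. -/

/-- An `FI`-module over a commutative ring `R`: a functor from the category `FI`, whose
objects are the standard finite sets `[n] = {1, …, n}` (realized as `Fin n`) and whose
morphisms are injections, to the category of `R`-modules.  It is described by its values
`V_n = obj n` on the standard finite sets together with an `R`-linear map for every
injection `Fin m ↪ Fin n`, compatibly with identities and composition. -/
structure FIModule (R : Type*) [CommRing R] where
  obj : ℕ → Type*
  addCommGroup : ∀ n, AddCommGroup (obj n)
  module : ∀ n, Module R (obj n)
  map : ∀ {m n : ℕ}, (Fin m ↪ Fin n) → obj m → obj n
  map_linear : ∀ {m n : ℕ} (f : Fin m ↪ Fin n), IsLinearMap R (map f)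
  map_id : ∀ n : ℕ, map (Function.Embedding.refl (Fin n)) = id
  map_comp : ∀ {m n p : ℕ} (f : Fin m ↪ Fin n) (g : Fin n ↪ Fin p),
    map (f.trans g) = map g ∘ map f

attribute [instance] FIModule.addCommGroup FIModule.module

variable {R : Type*} [CommRing R]

/-- The subset of `V_n` consisting of all images of elements of a set `S` of elements of
an FI-module `V` (each lying in some `V_m`) under the maps induced by FI-morphisms. -/
def FIModule.orbitSet (V : FIModule R) (S : Set (Σ m, V.obj m)) (n : ℕ) :
    Set (V.obj n) :=
  {x | ∃ s ∈ S, ∃ f : Fin s.1 ↪ Fin n, V.map f s.2 = x}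

/-- A set `S` of elements of an FI-module `V` (each lying in some `V_m`) generates `V`
if for every `n` the module `V_n` is spanned by the images of the elements of `S` under
the maps induced by all FI-morphisms. -/
def FIModule.IsGeneratedBy (V : FIModule R) (S : Set (Σ m, V.obj m)) : Prop :=
  ∀ n : ℕ, Submodule.span R (V.orbitSet S n) = ⊤

/-- An FI-module `V` is finitely generated in degree `≤ d` if it admits a finite
generating set all of whose elements lie in `V_m` for various `m ≤ d`. -/
def FIModule.IsFinitelyGeneratedInDegree (V : FIModule R) (d : ℕ) : Prop :=
  ∃ S : Set (Σ m, V.obj m), S.Finite ∧ (∀ s ∈ S, s.1 ≤ d) ∧ V.IsGeneratedBy S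

namespace FIModule

/-! ### Injections of standard finite sets -/

/-- The structure map of an FI-module as a bundled linear map. -/
def lin (V : FIModule R) {m n : ℕ} (f : Fin m ↪ Fin n) : V.obj m →ₗ[R] V.obj n :=
  (V.map_linear f).mk' _

theorem lin_trans (V : FIModule R) {m n p : ℕ} (f : Fin m ↪ Fin n) (g : Fin n ↪ Fin p)
    (x : V.obj m) : V.lin (f.trans g) x = V.lin g (V.lin f x) :=
  congrFun (V.map_comp f g) x

theorem lin_refl (V : FIModule R) {n : ℕ} (x : V.obj n) :
    V.lin (Function.Embedding.refl (Fin n)) x = x :=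
  congrFun (V.map_id n) x

/-- The injection `[n] → [n+1]` missing the new point `0`. -/
def inc (n : ℕ) : Fin n ↪ Fin (n + 1) := Fin.succEmb n

/-- The extension of an injection `[m] → [n]` to `[m+1] → [n+1]` fixing the new point `0`. -/
def ext {m n : ℕ} (f : Fin m ↪ Fin n) : Fin (m + 1) ↪ Fin (n + 1) where
  toFun := Fin.cons 0 (fun i => (f i).succ)
  inj' := by
    rw [Fin.cons_injective_iff]
    refine ⟨?_, fun i j h => f.injective (Fin.succ_injective _ h)⟩
    rintro ⟨i, hi⟩
    exact Fin.succ_ne_zero _ hi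

@[simp] theorem ext_zero {m n : ℕ} (f : Fin m ↪ Fin n) : ext f 0 = 0 := rfl

@[simp] theorem ext_succ {m n : ℕ} (f : Fin m ↪ Fin n) (i : Fin m) :
    ext f i.succ = (f i).succ := rfl

theorem inc_trans_ext {m n : ℕ} (f : Fin m ↪ Fin n) :
    (inc m).trans (ext f) = f.trans (inc n) := rfl

theorem ext_refl (n : ℕ) :
    ext (Function.Embedding.refl (Fin n)) = Function.Embedding.refl _ := by
  ext i
  refine Fin.cases ?_ (fun i => ?_) i <;> simp

theorem ext_trans {m n p : ℕ} (f : Fin m ↪ Fin n) (g : Fin n ↪ Fin p) :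
    ext (f.trans g) = (ext f).trans (ext g) := by
  ext i
  refine Fin.cases ?_ (fun i => ?_) i <;> simp

/-- A non-surjective injection extends along `inc`. -/
theorem exists_inc_trans {n p : ℕ} (f : Fin n ↪ Fin p) (h : n < p) :
    ∃ g : Fin (n + 1) ↪ Fin p, f = (inc n).trans g := by
  obtain ⟨y, hy⟩ : ∃ y, y ∉ Set.range f := by
    by_contra! hc
    have := Fintype.card_le_of_surjective f hc
    simp at this
    omega
  exact ⟨⟨Fin.cons y f, Fin.cons_injective_iff.2 ⟨hy, f.injective⟩⟩, rfl⟩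

/-- An injection into `[n+1]` missing `0` factors through `inc`. -/
theorem exists_trans_inc {m n : ℕ} (f : Fin m ↪ Fin (n + 1)) (h : ∀ i, f i ≠ 0) :
    ∃ g : Fin m ↪ Fin n, f = g.trans (inc n) := by
  refine ⟨⟨fun i => (f i).pred (h i), fun i j hij => f.injective ?_⟩, ?_⟩
  · exact Fin.pred_inj.1 hij
  · exact DFunLike.ext _ _ fun i => (Fin.succ_pred (f i) (h i)).symm

/-- An injection into `[n+1]` hitting `0` is, up to a permutation of its source, of the form
`ext g`. -/
theorem exists_trans_ext {m n : ℕ} (f : Fin (m + 1) ↪ Fin (n + 1)) (h : ∃ i, f i = 0) :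
    ∃ (s : Fin (m + 1) ↪ Fin (m + 1)) (g : Fin m ↪ Fin n), f = s.trans (ext g) := by
  obtain ⟨i, hi⟩ := h
  set s : Equiv.Perm (Fin (m + 1)) := Equiv.swap 0 i with hs
  have h0 : f (s 0) = 0 := by simp [hs, hi]
  have hne : ∀ j : Fin m, f (s j.succ) ≠ 0 := fun j hj => by
    have := s.injective (f.injective (hj.trans h0.symm))
    exact Fin.succ_ne_zero _ this
  let g : Fin m ↪ Fin n := ⟨fun j => (f (s j.succ)).pred (hne j), fun a b hab => by
    have := s.injective (f.injective (Fin.pred_inj.1 hab))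
    exact Fin.succ_injective _ this⟩
  refine ⟨s.toEmbedding, g, ?_⟩
  have key : ∀ j, ext g j = f (s j) := fun j => by
    refine Fin.cases ?_ (fun j => ?_) j
    · simp [h0]
    · exact Fin.succ_pred _ (hne j)
  ext j
  simp [key, hs]

/-! ### Sub-FI-modules and generation degree -/

/-- A sub-FI-module: a family of submodules stable under all structure maps. -/
structure Sub (V : FIModule R) where
  carrier : ∀ n, Submodule R (V.obj n)
  map_mem : ∀ {m n : ℕ} (f : Fin m ↪ Fin n) {x : V.obj m}, x ∈ carrier m →
    V.lin f x ∈ carrier n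

/-- The whole FI-module as a sub-FI-module of itself. -/
def Sub.whole (V : FIModule R) : V.Sub := ⟨fun _ => ⊤, fun _ _ _ => trivial⟩

/-- The zero sub-FI-module. -/
def Sub.zero (V : FIModule R) : V.Sub :=
  ⟨fun _ => ⊥, fun f x hx => by rw [Submodule.mem_bot] at hx ⊢; simp [hx]⟩

/-- The submodule of `U_n` spanned by the images of all `U_m` with `m < n`. -/
def Sub.dec {V : FIModule R} (U : V.Sub) (n : ℕ) : Submodule R (V.obj n) :=
  Submodule.span R {x | ∃ m, m < n ∧ ∃ f : Fin m ↪ Fin n, ∃ u ∈ U.carrier m, V.lin f u = x}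

/-- `U` is generated in degrees `< d`: in every degree `n ≥ d` nothing new is needed. -/
def Sub.GenLT {V : FIModule R} (U : V.Sub) (d : ℕ) : Prop :=
  ∀ n, d ≤ n → U.carrier n ≤ U.dec n

theorem Sub.dec_le {V : FIModule R} (U : V.Sub) (n : ℕ) : U.dec n ≤ U.carrier n := by
  refine Submodule.span_le.2 ?_
  rintro _ ⟨m, -, f, u, hu, rfl⟩
  exact U.map_mem f hu

/-- If `U` is generated in degrees `< d`, then `U_n` is contained in any submodule of `V_n` that
contains the images of all elements of `U` of degree `< d`. -/
theorem Sub.GenLT.le {V : FIModule R} {U : V.Sub} {d : ℕ} (h : U.GenLT d) {n : ℕ}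
    (W : Submodule R (V.obj n))
    (hW : ∀ m, m < d → ∀ (f : Fin m ↪ Fin n), ∀ u ∈ U.carrier m, V.lin f u ∈ W) :
    U.carrier n ≤ W := by
  have key : ∀ m, ∀ (f : Fin m ↪ Fin n), ∀ u ∈ U.carrier m, V.lin f u ∈ W := by
    intro m
    induction m using Nat.strong_induction_on with
    | _ m ih =>
      intro f u hu
      by_cases hm : m < d
      · exact hW m hm f u hu
      · have hle : U.dec m ≤ W.comap (V.lin f) := by
          refine Submodule.span_le.2 ?_
          rintro _ ⟨l, hl, g, w, hw, rfl⟩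
          change V.lin f (V.lin g w) ∈ W
          rw [← lin_trans]
          exact ih l hl _ w hw
        exact hle (h m (not_lt.1 hm) hu)
  intro x hx
  have := key n (Function.Embedding.refl _) x hx
  rwa [lin_refl] at this

theorem carrier_eq_bot_of_genLT_zero {V : FIModule R} {U : V.Sub} (h : U.GenLT 0) (n : ℕ) :
    U.carrier n = ⊥ :=
  le_bot_iff.1 (h.le ⊥ fun _ hm => absurd hm (Nat.not_lt_zero _))

/-! ### The derivative of an FI-module -/

/-- The derivative `DV` of an FI-module: the cokernel of the natural map from `V` to its shift,
`(DV)_n = V_{n+1} / im (V_n)`. -/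
def deriv (V : FIModule R) : FIModule R where
  obj n := V.obj (n + 1) ⧸ LinearMap.range (V.lin (inc n))
  addCommGroup _ := inferInstance
  module _ := inferInstance
  map {m n} f := Submodule.mapQ _ _ (V.lin (ext f)) (by
    rintro _ ⟨x, rfl⟩
    refine ⟨V.lin f x, ?_⟩
    rw [← lin_trans, ← lin_trans, inc_trans_ext])
  map_linear f := LinearMap.isLinear _
  map_id n := by
    funext x
    obtain ⟨x, rfl⟩ := Submodule.mkQ_surjective _ x
    simp [ext_refl, lin_refl]
  map_comp f g := by
    funext x
    obtain ⟨x, rfl⟩ := Submodule.mkQ_surjective _ x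
    simp [ext_trans, lin_trans]

/-- The projection `V_{n+1} → (DV)_n`. -/
def proj (V : FIModule R) (n : ℕ) : V.obj (n + 1) →ₗ[R] V.deriv.obj n :=
  Submodule.mkQ (LinearMap.range (V.lin (inc n)))

theorem proj_surjective (V : FIModule R) (n : ℕ) : Function.Surjective (V.proj n) :=
  Submodule.mkQ_surjective _

theorem ker_proj (V : FIModule R) (n : ℕ) :
    LinearMap.ker (V.proj n) = LinearMap.range (V.lin (inc n)) :=
  Submodule.ker_mkQ _

theorem deriv_lin_proj (V : FIModule R) {m n : ℕ} (f : Fin m ↪ Fin n) (x : V.obj (m + 1)) :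
    V.deriv.lin f (V.proj m x) = V.proj n (V.lin (ext f) x) := rfl

instance (V : FIModule R) (n : ℕ) [IsNoetherian R (V.obj (n + 1))] :
    IsNoetherian R (V.deriv.obj n) :=
  isNoetherian_of_surjective (V.proj n) (LinearMap.range_eq_top.2 (V.proj_surjective n))

/-- The image of the shift of `U` in `DV`. -/
def Sub.derivImage {V : FIModule R} (U : V.Sub) : V.deriv.Sub where
  carrier n := (U.carrier (n + 1)).map (V.proj n)
  map_mem := by
    rintro m n f _ ⟨x, hx, rfl⟩
    exact ⟨_, U.map_mem (ext f) hx, (V.deriv_lin_proj f x).symm⟩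

/-- Passing to the derivative lowers the generation degree by one. -/
theorem genLT_deriv {V : FIModule R} {d : ℕ} (h : (Sub.whole V).GenLT (d + 1)) :
    (Sub.whole V.deriv).GenLT d := by
  intro n hn y _
  obtain ⟨x, rfl⟩ := V.proj_surjective n y
  have hle : (Sub.whole V).dec (n + 1) ≤ ((Sub.whole V.deriv).dec n).comap (V.proj n) := by
    refine Submodule.span_le.2 ?_
    rintro _ ⟨m, hm, f, v, -, rfl⟩
    change V.proj n (V.lin f v) ∈ (Sub.whole V.deriv).dec n
    by_cases h0 : ∃ i, f i = 0
    · obtain _ | m := m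
      · exact h0.choose.elim0
      · obtain ⟨s, g, rfl⟩ := exists_trans_ext f h0
        rw [lin_trans, ← deriv_lin_proj]
        exact Submodule.subset_span ⟨m, by omega, g, _, trivial, rfl⟩
    · push Not at h0
      obtain ⟨g, rfl⟩ := exists_trans_inc f h0
      have : V.proj n (V.lin (g.trans (inc n)) v) = 0 := by
        rw [← LinearMap.mem_ker, ker_proj, lin_trans]
        exact ⟨_, rfl⟩
      rw [this]
      exact zero_mem _
  exact hle (h (n + 1) (by omega) trivial)

/-! ### Noetherianity -/

/-- `V/U` has no element of degree `≥ M` killed by `inc`. -/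
def Sub.SatFrom {V : FIModule R} (U : V.Sub) (M : ℕ) : Prop :=
  ∀ n, M ≤ n → ∀ v : V.obj n, V.lin (inc n) v ∈ U.carrier (n + 1) → v ∈ U.carrier n

/-- If `V/U` is torsion-free in high degrees, then generators of the image of `U` in `DV` lift to
generators of `U`: a remainder lies in the image of `V_n`, hence of `U_n`. -/
theorem Sub.SatFrom.genLT {V : FIModule R} {U : V.Sub} {M e : ℕ} (hM : U.SatFrom M)
    (he : U.derivImage.GenLT e) : U.GenLT (max M e + 1) := by
  intro n hn x hx
  obtain _ | n := n
  · omega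
  have hle : U.derivImage.dec n ≤ (U.dec (n + 1)).map (V.proj n) := by
    refine Submodule.span_le.2 ?_
    rintro _ ⟨m, hm, f, _, ⟨u, hu, rfl⟩, rfl⟩
    exact ⟨V.lin (ext f) u, Submodule.subset_span ⟨m + 1, by omega, _, u, hu, rfl⟩,
      (V.deriv_lin_proj f u).symm⟩
  obtain ⟨a, ha, hax⟩ := hle (he n (by omega) ⟨x, hx, rfl⟩)
  have hker : x - a ∈ LinearMap.range (V.lin (inc n)) := by
    rw [← ker_proj, LinearMap.mem_ker, map_sub, hax, sub_self]
  obtain ⟨v, hv⟩ := hker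
  have hvU : v ∈ U.carrier n := hM n (by omega) v (by
    rw [hv]; exact sub_mem hx (U.dec_le _ ha))
  have hva : V.lin (inc n) v ∈ U.dec (n + 1) :=
    Submodule.subset_span ⟨n, by omega, _, v, hvU, rfl⟩
  rw [hv] at hva
  simpa using add_mem hva ha

/-- The elements of `V` all of whose images in degrees `≥ N` lie in `U`. -/
def Sub.torsAt {V : FIModule R} (U : V.Sub) (N n : ℕ) : Submodule R (V.obj n) :=
  ⨅ (p : ℕ) (_ : N ≤ p) (f : Fin n ↪ Fin p), (U.carrier p).comap (V.lin f)

theorem Sub.mem_torsAt {V : FIModule R} (U : V.Sub) {N n : ℕ} {v : V.obj n} :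
    v ∈ U.torsAt N n ↔ ∀ p, N ≤ p → ∀ f : Fin n ↪ Fin p, V.lin f v ∈ U.carrier p := by
  simp [Sub.torsAt, Submodule.mem_iInf]

theorem Sub.torsAt_mono {V : FIModule R} (U : V.Sub) (n : ℕ) :
    Monotone fun N => U.torsAt N n := by
  intro N N' h v hv
  rw [U.mem_torsAt] at hv ⊢
  exact fun p hp => hv p (h.trans hp)

theorem Sub.mem_iSup_torsAt {V : FIModule R} (U : V.Sub) {n : ℕ} {v : V.obj n} :
    v ∈ ⨆ N, U.torsAt N n ↔ ∃ N, v ∈ U.torsAt N n :=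
  Submodule.mem_iSup_of_directed _ (U.torsAt_mono n).directed_le

/-- The preimage in `V` of the torsion of `V/U`: elements whose images eventually lie in `U`. -/
def Sub.tors {V : FIModule R} (U : V.Sub) : V.Sub where
  carrier n := ⨆ N, U.torsAt N n
  map_mem := by
    intro m n f x hx
    rw [U.mem_iSup_torsAt] at hx ⊢
    obtain ⟨N, hN⟩ := hx
    refine ⟨N, ?_⟩
    rw [U.mem_torsAt] at hN ⊢
    intro p hp g
    rw [← lin_trans]
    exact hN p hp _

theorem Sub.satFrom_tors {V : FIModule R} (U : V.Sub) : U.tors.SatFrom 0 := by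
  intro n _ v hv
  obtain ⟨N, hN⟩ := U.mem_iSup_torsAt.1 hv
  refine U.mem_iSup_torsAt.2 ⟨max N (n + 1), ?_⟩
  rw [U.mem_torsAt] at hN ⊢
  intro p hp f
  obtain ⟨g, rfl⟩ := exists_inc_trans f (by omega : n < p)
  rw [lin_trans]
  exact hN p (by omega) g

/-- If the preimage of the torsion of `V/U` is generated in bounded degree, then the torsion of
`V/U` vanishes in high degrees. -/
theorem Sub.satFrom_of_tors {V : FIModule R} [∀ n, IsNoetherian R (V.obj n)] (U : V.Sub) {e : ℕ}
    (he : U.tors.GenLT e) : ∃ M, U.SatFrom M := by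
  have hstab : ∀ m, ∃ N, U.tors.carrier m ≤ U.torsAt N m := by
    intro m
    obtain ⟨N, hN⟩ := monotone_stabilizes_iff_noetherian.2 (inferInstance : IsNoetherian R (V.obj m))
      ⟨fun N => U.torsAt N m, U.torsAt_mono m⟩
    refine ⟨N, iSup_le fun N' => ?_⟩
    refine (U.torsAt_mono m (le_max_right N N')).trans ?_
    exact (hN (max N N') (le_max_left _ _)).ge
  choose B hB using hstab
  have hle : ∀ n, (Finset.range e).sup B ≤ n → U.tors.carrier n ≤ U.carrier n := by
    intro n hn
    refine he.le _ fun m hm f u hu => ?_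
    exact U.mem_torsAt.1 (hB m hu) n
      ((Finset.le_sup (f := B) (Finset.mem_range.2 hm)).trans hn) f
  refine ⟨(Finset.range e).sup B, fun n hn v hv => hle n hn ?_⟩
  refine U.satFrom_tors n (Nat.zero_le _) v ?_
  refine U.mem_iSup_torsAt.2 ⟨0, U.mem_torsAt.2 fun p _ f => U.map_mem f hv⟩

/-- Noetherianity: if `V` is generated in degrees `< d` and has Noetherian values, every
sub-FI-module is generated in bounded degree. -/
theorem exists_genLT (d : ℕ) : ∀ (V : FIModule R) [∀ n, IsNoetherian R (V.obj n)],
    (Sub.whole V).GenLT d → ∀ U : V.Sub, ∃ e, U.GenLT e := by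
  induction d with
  | zero =>
    intro V _ h U
    refine ⟨0, fun n _ => ?_⟩
    have := carrier_eq_bot_of_genLT_zero h n
    exact (le_top.trans this.le).trans bot_le
  | succ d ih =>
    intro V _ h U
    obtain ⟨e, he⟩ := ih V.deriv (genLT_deriv h) U.tors.derivImage
    obtain ⟨M, hM⟩ := U.satFrom_of_tors (U.satFrom_tors.genLT he)
    obtain ⟨e₂, he₂⟩ := ih V.deriv (genLT_deriv h) U.derivImage
    exact ⟨_, hM.genLT he₂⟩

/-- In high degrees the maps `V_n → V_{n+1}` are injective: Noetherianity bounds the generation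
degree of the torsion of `V`, the case `U = 0` of `Sub.satFrom_of_tors`. -/
theorem exists_inc_injective {V : FIModule R} [∀ n, IsNoetherian R (V.obj n)] {d : ℕ}
    (h : (Sub.whole V).GenLT d) :
    ∃ M, ∀ n, M ≤ n → Function.Injective (V.lin (inc n)) := by
  obtain ⟨e, he⟩ := exists_genLT d V h (Sub.zero V).tors
  obtain ⟨M, hM⟩ := (Sub.zero V).satFrom_of_tors he
  refine ⟨M, fun n hn => (injective_iff_map_eq_zero _).2 fun v hv => ?_⟩
  exact (Submodule.mem_bot R).1 (hM n hn v ((Submodule.mem_bot R).2 hv))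

/-! ### Dimension count -/

/-- Every rational polynomial is the forward difference of a polynomial of degree at most one
more. -/
theorem exists_antidifference (p : Polynomial ℚ) (d : ℕ) (hp : p.degree < d) :
    ∃ q : Polynomial ℚ, q.degree < (d + 1 : ℕ) ∧
      ∀ x : ℚ, q.eval (x + 1) = q.eval x + p.eval x := by
  -- The Bernoulli polynomial `B_{i+1}` has forward difference `(i + 1) X ^ i`.
  refine ⟨∑ i ∈ Finset.range d,
    Polynomial.C (p.coeff i / (i + 1)) * Polynomial.bernoulli (i + 1), ?_, fun x => ?_⟩
  · rw [Polynomial.degree_lt_iff_coeff_zero]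
    intro m hm
    rw [Polynomial.finsetSum_coeff]
    refine Finset.sum_eq_zero fun i hi => ?_
    have := Finset.mem_range.1 hi
    rw [Polynomial.coeff_C_mul, Polynomial.coeff_bernoulli, if_neg (by omega), mul_zero]
  · have hpx : p.eval x = ∑ i ∈ Finset.range d, p.coeff i * x ^ i := by
      by_cases h0 : p = 0
      · simp [h0]
      · exact Polynomial.eval_eq_sum_range' ((Polynomial.natDegree_lt_iff_degree_lt h0).2 hp) x
    rw [hpx, Polynomial.eval_finsetSum, Polynomial.eval_finsetSum, ← Finset.sum_add_distrib]
    refine Finset.sum_congr rfl fun i _ => ?_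
    have hi : (i : ℚ) + 1 ≠ 0 := by positivity
    rw [Polynomial.eval_C_mul, Polynomial.eval_C_mul, add_comm x 1,
      Polynomial.bernoulli_eval_one_add]
    push_cast
    field_simp

/-- The dimensions of an FI-module over a field generated in degrees `< d` eventually agree with a
polynomial of degree `< d`, by summing the dimensions of its derivative. -/
theorem exists_polynomial {k : Type*} [Field k] (d : ℕ) : ∀ (V : FIModule k)
    [∀ n, IsNoetherian k (V.obj n)], (Sub.whole V).GenLT d →
    ∃ p : Polynomial ℚ, p.degree < d ∧ ∃ N : ℕ, ∀ n : ℕ, N ≤ n →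
      (Module.finrank k (V.obj n) : ℚ) = p.eval (n : ℚ) := by
  induction d with
  | zero =>
    intro V _ h
    refine ⟨0, by simp, 0, fun n _ => ?_⟩
    have h0 : (⊤ : Submodule k (V.obj n)) = ⊥ := carrier_eq_bot_of_genLT_zero h n
    rw [← finrank_top, h0]
    simp
  | succ d ih =>
    intro V _ h
    obtain ⟨p, hp, N, hN⟩ := ih V.deriv (genLT_deriv h)
    obtain ⟨q, hq, hqp⟩ := exists_antidifference p d hp
    obtain ⟨M, hM⟩ := exists_inc_injective h
    have hstep : ∀ n, max M N ≤ n → (Module.finrank k (V.obj (n + 1)) : ℚ) =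
        Module.finrank k (V.obj n) + p.eval (n : ℚ) := by
      intro n hn
      rw [← hN n (by omega), ← LinearMap.finrank_range_of_inj (hM n (by omega)), ← ker_proj,
        ← LinearMap.finrank_range_add_finrank_ker (V.proj n),
        LinearMap.range_eq_top.2 (V.proj_surjective n), finrank_top]
      push_cast
      ring
    set L := max M N
    set c : ℚ := Module.finrank k (V.obj L) - q.eval (L : ℚ) with hc
    refine ⟨q + Polynomial.C c, ?_, L, fun n hn => ?_⟩
    · refine (Polynomial.degree_add_le _ _).trans_lt (max_lt hq ?_)
      refine Polynomial.degree_C_le.trans_lt ?_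
      exact_mod_cast Nat.succ_pos d
    · induction n, hn using Nat.le_induction with
      | base => simp [hc]
      | succ n hn ihn =>
        rw [hstep n hn, ihn]
        push_cast
        simp only [Polynomial.eval_add, Polynomial.eval_C, hqp]
        ring

theorem IsFinitelyGeneratedInDegree.genLT {V : FIModule R} {d : ℕ}
    (hV : V.IsFinitelyGeneratedInDegree d) : (Sub.whole V).GenLT (d + 1) := by
  obtain ⟨S, -, hd, hS⟩ := hV
  intro n hn
  change ⊤ ≤ _
  rw [← hS n]
  refine Submodule.span_mono ?_
  rintro _ ⟨s, hs, f, rfl⟩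
  exact ⟨s.1, by have := hd s hs; omega, f, s.2, trivial, rfl⟩

theorem IsFinitelyGeneratedInDegree.finite {V : FIModule R} {d : ℕ}
    (hV : V.IsFinitelyGeneratedInDegree d) (n : ℕ) : Module.Finite R (V.obj n) := by
  obtain ⟨S, hfin, -, hS⟩ := hV
  have : (V.orbitSet S n).Finite := by
    have : V.orbitSet S n = ⋃ s ∈ S, Set.range fun f : Fin s.1 ↪ Fin n => V.map f s.2 := by
      ext x
      simp [orbitSet]
    rw [this]
    exact hfin.biUnion fun s _ => Set.finite_range _
  exact ⟨hS n ▸ Submodule.fg_span this⟩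

end FIModule

/-- **Polynomial growth of dimensions.**  Let `V` be an FI-module over `ℚ` that is
finitely generated in degree `≤ d`.  Then there is a polynomial `p ∈ ℚ[T]` of degree at
most `d` such that for all sufficiently large `n`, the space `V_n` is finite-dimensional
of dimension `p(n)`. -/
theorem fimodule_dimension_polynomial (V : FIModule ℚ) (d : ℕ)
    (hV : V.IsFinitelyGeneratedInDegree d) :
    ∃ p : Polynomial ℚ, p.natDegree ≤ d ∧ ∃ N : ℕ, ∀ n : ℕ, N ≤ n →
      FiniteDimensional ℚ (V.obj n) ∧
        (Module.finrank ℚ (V.obj n) : ℚ) = p.eval (n : ℚ) := by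
  have hfin := hV.finite
  have : ∀ n, IsNoetherian ℚ (V.obj n) := fun n => inferInstance
  obtain ⟨p, hp, N, hN⟩ := FIModule.exists_polynomial (d + 1) V hV.genLT
  refine ⟨p, ?_, N, fun n hn => ⟨hfin n, hN n hn⟩⟩
  by_cases h0 : p = 0
  · simp [h0]
  · exact Nat.lt_succ_iff.1 ((Polynomial.natDegree_lt_iff_degree_lt h0).2 hp)
end

section
/- (Noetherian property of FI-modules.) Let V be a finitely generated FI-module over ℚ, and let W be a sub-FI-module of V, i.e., a choice of ℚ-subspace W_n ⊆ V_n for each n such that V(f)(W_m) ⊆ W_n for every FI-morphism f : [m] → [n]. Then W is itself a finitely generated FI-module. -/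
variable {R : Type*} [CommRing R]

/-- The monomials of degree `n`: the basis of the value at `[n]` of the free FI-module with one
generator in each degree `d i`. -/
def FIMonomial {k : ℕ} (d : Fin k → ℕ) (n : ℕ) : Type :=
  Σ i : Fin k, (Fin (d i) ↪ Fin n)

namespace FIMonomial

variable {k : ℕ} {d : Fin k → ℕ}

instance (n : ℕ) : Finite (FIMonomial d n) :=
  inferInstanceAs (Finite (Σ i : Fin k, (Fin (d i) ↪ Fin n)))

/-- The monomial `(i, f)` as a point of the lexicographically ordered set of pairs of an index and
a tuple of values. -/
def key {n : ℕ} (b : FIMonomial d n) : Σₗ i : Fin k, Lex (Fin (d i) → Fin n) :=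
  toLex ⟨b.1, toLex ⇑b.2⟩

theorem key_injective {n : ℕ} : Function.Injective (key : FIMonomial d n → _) := by
  rintro ⟨i, f⟩ ⟨j, g⟩ h
  have h1 : (⟨i, ⇑f⟩ : Σ i : Fin k, (Fin (d i) → Fin n)) = ⟨j, ⇑g⟩ := h
  obtain ⟨rfl, h2⟩ := Sigma.mk.inj_iff.1 h1
  have h3 : f = g := DFunLike.coe_injective (eq_of_heq h2)
  rw [h3]

noncomputable instance (n : ℕ) : LinearOrder (FIMonomial d n) :=
  LinearOrder.lift' key key_injective

theorem lt_iff {n : ℕ} (b c : FIMonomial d n) :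
    b < c ↔ b.1 < c.1 ∨ ∃ h : b.1 = c.1, ∃ a : Fin (d c.1),
      (∀ e < a, b.2 (Fin.cast (congrArg d h.symm) e) = c.2 e) ∧
        b.2 (Fin.cast (congrArg d h.symm) a) < c.2 a := by
  change key b < key c ↔ _
  rw [Sigma.Lex.lt_def]
  refine or_congr Iff.rfl ?_
  obtain ⟨i, f⟩ := b
  obtain ⟨j, g⟩ := c
  constructor
  · rintro ⟨h, h'⟩
    change i = j at h
    subst h
    exact ⟨rfl, h'⟩
  · rintro ⟨h, h'⟩
    change i = j at h
    subst h
    exact ⟨rfl, h'⟩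

/-- Post-composition of a monomial with a strictly monotone map `[n] → [p]`. -/
def act {n p : ℕ} (g : Fin n ↪o Fin p) (b : FIMonomial d n) : FIMonomial d p :=
  ⟨b.1, b.2.trans g.toEmbedding⟩

theorem act_strictMono {n p : ℕ} (g : Fin n ↪o Fin p) :
    StrictMono (act g : FIMonomial d n → FIMonomial d p) := by
  intro b c h
  rw [lt_iff] at h
  refine (lt_iff _ _).2 (h.imp id ?_)
  rintro ⟨h, a, h1, h2⟩
  exact ⟨h, a, fun e he => congrArg g (h1 e he), g.strictMono h2⟩

/-- Divisibility of monomials of possibly different degrees, under strictly monotone maps. -/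
def Divides (b c : Σ n, FIMonomial d n) : Prop :=
  ∃ g : Fin b.1 ↪o Fin c.1, act g b.2 = c.2

/-- The word of a monomial `(i, f)` of degree `n`: its `p`-th letter is the fibre `f ⁻¹ {p}`, which
is empty or a singleton, labelled by `i`. -/
def word (b : Σ n, FIMonomial d n) : List (Set (Σ i : Fin k, Fin (d i))) :=
  List.ofFn fun p : Fin b.1 => {q | ∃ j : Fin (d b.2.1), q = ⟨b.2.1, j⟩ ∧ b.2.2 j = p}

theorem divides_of_word {b c : Σ n, FIMonomial d n} (hi : b.2.1 = c.2.1)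
    (h : (word b).Sublist (word c)) : Divides b c := by
  obtain ⟨n, i, f⟩ := b
  obtain ⟨p, i', f'⟩ := c
  change i = i' at hi
  subst hi
  obtain ⟨g, hg⟩ := List.sublist_iff_exists_fin_orderEmbedding_get_eq.1 h
  have hn : (word (⟨n, i, f⟩ : Σ n, FIMonomial d n)).length = n := by simp [word]
  have hp : (word (⟨p, i, f'⟩ : Σ n, FIMonomial d n)).length = p := by simp [word]
  let G : Fin n ↪o Fin p :=
    ((Fin.castOrderIso hn.symm).toOrderEmbedding.trans g).trans
      (Fin.castOrderIso hp).toOrderEmbedding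
  refine ⟨G, ?_⟩
  have key : f.trans G.toEmbedding = f' := by
    ext1 j
    have h1 := hg (Fin.cast hn.symm (f j))
    have h2 : (⟨i, j⟩ : Σ i : Fin k, Fin (d i)) ∈
        (word (⟨n, i, f⟩ : Σ n, FIMonomial d n)).get (Fin.cast hn.symm (f j)) := by
      simp only [word, List.get_ofFn]
      exact ⟨j, rfl, rfl⟩
    rw [h1] at h2
    simp only [word, List.get_ofFn] at h2
    obtain ⟨j', hj, hj'⟩ := h2
    obtain rfl : j = j' := by simpa using hj
    exact hj'.symm
  change (⟨i, f.trans G.toEmbedding⟩ : FIMonomial d p) = ⟨i, f'⟩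
  rw [key]

theorem wellQuasiOrdered_divides : WellQuasiOrdered (Divides (d := d)) := by
  have h1 : WellQuasiOrdered (List.SublistForall₂
      (Eq : Set (Σ i : Fin k, Fin (d i)) → _ → Prop)) := by
    have := Set.PartiallyWellOrderedOn.partiallyWellOrderedOn_sublistForall₂
      (Eq : Set (Σ i : Fin k, Fin (d i)) → _ → Prop)
      (Set.partiallyWellOrderedOn_univ_iff.2 (Finite.wellQuasiOrdered _))
    simpa [Set.partiallyWellOrderedOn_univ_iff] using this
  have h2 := (Finite.wellQuasiOrdered (Eq : Fin k → Fin k → Prop)).prod h1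
  intro a
  obtain ⟨m, n, hmn, hi, hw⟩ := h2 fun t => ((a t).2.1, word (a t))
  refine ⟨m, n, hmn, divides_of_word hi ?_⟩
  obtain ⟨l, hl, hs⟩ := List.sublistForall₂_iff.1 hw
  rw [List.forall₂_eq_eq_eq] at hl
  change word (a m) = l at hl
  exact hl.symm ▸ hs

/-- Every set of monomials is covered by the multiples of finitely many of its members. -/
theorem exists_finset_divides (P : (Σ n, FIMonomial d n) → Prop) :
    ∃ F : Finset (Σ n, FIMonomial d n), (∀ b ∈ F, P b) ∧
      ∀ c, P c → ∃ b ∈ F, Divides b c := by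
  by_contra! hcon
  obtain ⟨a, -, ha⟩ := exists_seq_of_forall_finset_exists P (fun b c => ¬ Divides b c) hcon
  obtain ⟨m, n, hmn, h⟩ := wellQuasiOrdered_divides a
  exact ha m n hmn h

/-- `b` is the leading monomial of `v`: the largest monomial with nonzero coefficient. -/
def IsLead {n : ℕ} (v : FIMonomial d n →₀ ℚ) (b : FIMonomial d n) : Prop :=
  v b ≠ 0 ∧ ∀ c, b < c → v c = 0

theorem IsLead.mapDomain_act {n p : ℕ} (g : Fin n ↪o Fin p) {v : FIMonomial d n →₀ ℚ}
    {b : FIMonomial d n} (h : IsLead v b) : IsLead (v.mapDomain (act g)) (act g b) := by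
  have hg := act_strictMono (d := d) g
  refine ⟨by rw [Finsupp.mapDomain_apply hg.injective]; exact h.1, fun c hc => ?_⟩
  by_cases hr : c ∈ Set.range (act g : FIMonomial d n → FIMonomial d p)
  · obtain ⟨c, rfl⟩ := hr
    rw [Finsupp.mapDomain_apply hg.injective]
    exact h.2 c (hg.lt_iff_lt.1 hc)
  · exact Finsupp.mapDomain_of_notMem_range _ _ hr

theorem exists_isLead {n : ℕ} {v : FIMonomial d n →₀ ℚ} (hv : v ≠ 0) :
    ∃ b, IsLead v b ∧ v.support.max = b := by
  have hne : v.support.Nonempty := Finsupp.support_nonempty_iff.2 hv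
  refine ⟨v.support.max' hne, ⟨Finsupp.mem_support_iff.1 (Finset.max'_mem _ _), fun c hc => ?_⟩,
    (Finset.coe_max' hne).symm⟩
  by_contra h0
  exact absurd (Finset.le_max' _ _ (Finsupp.mem_support_iff.2 h0)) (not_le.2 hc)

end FIMonomial

open FIMonomial in
/-- The Noetherian property for an FI-module with an indexed finite family of generators. -/
theorem FIModule.exists_finite_generating_of_index (V : FIModule ℚ) {k : ℕ} (d : Fin k → ℕ)
    (x : ∀ i, V.obj (d i))
    (hx : ∀ n, Submodule.span ℚ
      (Set.range fun b : FIMonomial d n => V.map b.2 (x b.1)) = ⊤)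
    (W : ∀ n : ℕ, Submodule ℚ (V.obj n))
    (hW : ∀ (m n : ℕ) (f : Fin m ↪ Fin n), ∀ x ∈ W m, V.map f x ∈ W n) :
    ∃ T : Set (Σ m, V.obj m), T.Finite ∧ (∀ t ∈ T, t.2 ∈ W t.1) ∧
      ∀ n : ℕ, Submodule.span ℚ (V.orbitSet T n) = W n := by
  classical
  let π : ∀ n, (FIMonomial d n →₀ ℚ) →ₗ[ℚ] V.obj n := fun n =>
    Finsupp.linearCombination ℚ fun b : FIMonomial d n => V.map b.2 (x b.1)
  have hπ : ∀ n y, ∃ v, π n v = y := fun n y => by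
    have : y ∈ LinearMap.range (π n) := by
      rw [Finsupp.range_linearCombination, hx]; trivial
    exact this
  have hact : ∀ {n p : ℕ} (g : Fin n ↪o Fin p) (v : FIMonomial d n →₀ ℚ),
      π p (v.mapDomain (act g)) = V.map g.toEmbedding (π n v) := by
    intro n p g v
    change π p (v.mapDomain (act g)) = (V.map_linear g.toEmbedding).mk' _ (π n v)
    simp only [π]
    rw [Finsupp.linearCombination_mapDomain, Finsupp.apply_linearCombination]
    congr 2
    funext b
    exact congrFun (V.map_comp b.2 g.toEmbedding) (x b.1)
  obtain ⟨F, hF, hFdiv⟩ := exists_finset_divides (d := d)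
    fun b => ∃ v, π b.1 v ∈ W b.1 ∧ IsLead v b.2
  choose! v hvW hvL using hF
  refine ⟨(fun b => (⟨b.1, π b.1 (v b)⟩ : Σ m, V.obj m)) '' F, F.finite_toSet.image _, ?_, ?_⟩
  · rintro _ ⟨b, hb, rfl⟩
    exact hvW b hb
  intro n
  apply le_antisymm
  · rw [Submodule.span_le]
    rintro _ ⟨_, ⟨b, hb, rfl⟩, f, rfl⟩
    exact hW _ _ f _ (hvW b hb)
  -- The division algorithm: induction on the leading monomial of a lift `u` of the element.
  have main : ∀ (m : WithBot (FIMonomial d n)) (u : FIMonomial d n →₀ ℚ), u.support.max = m →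
      π n u ∈ W n → π n u ∈ Submodule.span ℚ
        (V.orbitSet ((fun b => (⟨b.1, π b.1 (v b)⟩ : Σ m, V.obj m)) '' F) n) := by
    intro m
    induction m using WellFoundedLT.induction with
    | ind m ih =>
    intro u hm hu
    by_cases h0 : u = 0
    · simp [h0]
    obtain ⟨c, hc, hmax⟩ := exists_isLead h0
    obtain ⟨b, hb, g, hg⟩ := hFdiv ⟨n, c⟩ ⟨u, hu, hc⟩
    change Fin b.1 ↪o Fin n at g
    change act g b.2 = c at hg
    set w := (v b).mapDomain (act g) with hw
    have hwL : IsLead w c := hg ▸ (hvL b hb).mapDomain_act g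
    have hwW : π n w ∈ W n := by rw [hact]; exact hW _ _ _ _ (hvW b hb)
    have hwS : π n w ∈ Submodule.span ℚ
        (V.orbitSet ((fun b => (⟨b.1, π b.1 (v b)⟩ : Σ m, V.obj m)) '' F) n) := by
      rw [hact]
      exact Submodule.subset_span ⟨_, ⟨b, hb, rfl⟩, g.toEmbedding, rfl⟩
    have hlt : (u - (u c / w c) • w).support.max < m := by
      rw [← hm, hmax, Finset.max, Finset.sup_lt_iff (WithBot.bot_lt_coe c)]
      intro e he
      rw [WithBot.coe_lt_coe]
      by_contra! hce
      apply Finsupp.mem_support_iff.1 he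
      rcases hce.eq_or_lt with rfl | hce
      · simp [div_mul_cancel₀ _ hwL.1]
      · simp [hc.2 e hce, hwL.2 e hce]
    have hrec := ih _ hlt (u - (u c / w c) • w) rfl (by
      rw [map_sub, map_smul]
      exact sub_mem hu (Submodule.smul_mem _ _ hwW))
    rw [map_sub, map_smul] at hrec
    simpa using add_mem hrec (Submodule.smul_mem _ (u c / w c) hwS)
  intro y hy
  obtain ⟨u, rfl⟩ := hπ n y
  exact main _ u rfl hy

/-- **Noetherian property of FI-modules (Church–Ellenberg–Farb, Snowden).**
Let `V` be a finitely generated FI-module over `ℚ` and let `W` be a sub-FI-module of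
`V`, i.e. a choice of `ℚ`-subspace `W_n ⊆ V_n` for each `n` with `V(f)(W_m) ⊆ W_n` for
every FI-morphism `f : [m] ↪ [n]`.  Then `W` is itself finitely generated: there is a
finite set of elements of the `W_n`'s whose images under all FI-morphisms span `W_n` for
every `n`. -/
theorem fimodule_noetherian (V : FIModule ℚ)
    (hV : ∃ S : Set (Σ m, V.obj m), S.Finite ∧ V.IsGeneratedBy S)
    (W : ∀ n : ℕ, Submodule ℚ (V.obj n))
    (hW : ∀ (m n : ℕ) (f : Fin m ↪ Fin n), ∀ x ∈ W m, V.map f x ∈ W n) :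
    ∃ T : Set (Σ m, V.obj m), T.Finite ∧ (∀ t ∈ T, t.2 ∈ W t.1) ∧
      ∀ n : ℕ, Submodule.span ℚ (V.orbitSet T n) = W n := by
  obtain ⟨S, hS, hgen⟩ := hV
  have := hS.to_subtype
  obtain ⟨k, ⟨e⟩⟩ := Finite.exists_equiv_fin S
  refine V.exists_finite_generating_of_index (fun i => (e.symm i).1.1) (fun i => (e.symm i).1.2)
    (fun n => ?_) W hW
  rw [eq_top_iff, ← hgen n]
  apply Submodule.span_mono
  rintro _ ⟨s, hs, f, rfl⟩
  obtain ⟨i, hi⟩ := e.symm.surjective ⟨s, hs⟩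
  obtain rfl : (e.symm i).1 = s := by rw [hi]
  exact ⟨⟨i, f⟩, rfl⟩
end
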